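/- arXiv:1609.09703 — 2 statements merged into one kernel-verified Lean document; each statement's English description precedes it below -/
import Mathlib

section
/- Let d ≥ 3 be an integer. There exists a constant C = C(d) > 0 with the following property: for every V : ℤᵈ → ℂ with ∑_{n ∈ ℤᵈ} |V(n)|^{2/3} < ∞, letting H = Δ + V, and letting E denote the set of eigenvalues of H lying in ℂ∖[−d,d], one has ∑_{λ ∈ E} (1 − |z(λ)|) ≤ C · ‖V‖_{2/3}, where each eigenvalue is counted once. -/
/-!
The eigenvalues of `H = L + V` off `[-d, d]` are captured by the perturbation determinant
`D(z) = det (1 + (L - λ)⁻¹ V)`, `λ = (d/2)(z + 1/z)`, an analytic function of `z` in the unit disc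
with `D(0) = 1`. If `|D| ≤ exp (C ‖V‖_{2/3})` on the disc, Jensen's inequality bounds the sum of
`1 - |z|` over the zeros of `D` by `C ‖V‖_{2/3}`. To avoid infinite determinants, `D` is replaced by
its truncations `truncDet` to finite sets `F` of sites. They satisfy the same bound, and they tend to
`0` as `F` grows at every point `z` coming from an eigenvalue (`truncDet_tendsto_zero`, by Cramer's
rule applied to an eigenvector). Such approximate zeros are enough for Jensen's inequality, after a
correction by Lagrange interpolation (`sum_one_sub_norm_le`).

The bound on the determinant has two sources. The first is that the kernel of `(L - λ)⁻¹` is bounded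
by a constant, uniformly in `λ` and in the sites, when `d ≥ 3` (`exists_green_bound`). The resolvent
is a Laplace transform of `exp (±itL)`, whose kernel is, up to a unimodular factor, the product
`∏ⱼ J_{nⱼ - mⱼ}(t)` of Bessel functions (`propagator_single`). With at least three factors of modulus
at most one, the product is at most `∑ⱼ |J_{nⱼ - mⱼ}(t)|³`, and `∫₀^∞ |J_n|³` is bounded uniformly in
`n` (`exists_integral_bessel_cube_le`): monotonicity of the energy of Bessel's equation for `t > n`
and integration by parts in Bessel's integral for `t < n` give `J_n(t)² ≤ 6 / (1 + |t - n|)`.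

The second is a bound for determinants whose columns are bounded by `c_j³`, namely
`|det (1 + K)| ≤ exp (e^{1/2} (∑ c_j²)^{3/2})` (`norm_det_one_add_le`), from the expansion in
principal minors and Hadamard's inequality. With `c_j = (B |V_j|)^{1/3}` the sum `∑ c_j²` is a
multiple of `∑ |V_j|^{2/3}`, which is where the exponent `2/3` comes from.
-/

/-- `L` is the discrete Laplacian on `ℓ²(ℤᵈ)`:
`(Lf)(n) = (1/2)∑_{j=1}^d (f(n+eⱼ) + f(n-eⱼ))`. -/
def IsDiscreteLaplacian (d : ℕ)
    (L : lp (fun _ : Fin d → ℤ => ℂ) 2 →L[ℂ] lp (fun _ : Fin d → ℤ => ℂ) 2) : Prop :=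
  ∀ (f : lp (fun _ : Fin d → ℤ => ℂ) 2) (n : Fin d → ℤ),
    L f n = (1 / 2) * ∑ j : Fin d, (f (n + Pi.single j 1) + f (n - Pi.single j 1))

/-- `T` is the operator of multiplication by `V` on `ℓ²(ℤᵈ)`. -/
def IsMulOp (d : ℕ) (V : (Fin d → ℤ) → ℂ)
    (T : lp (fun _ : Fin d → ℤ => ℂ) 2 →L[ℂ] lp (fun _ : Fin d → ℤ => ℂ) 2) : Prop :=
  ∀ (f : lp (fun _ : Fin d → ℤ => ℂ) 2) (n : Fin d → ℤ), T f n = V n * f n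

/-- The set of eigenvalues of `H` lying in `ℂ \ [-d,d]`. -/
def evSet (d : ℕ)
    (H : lp (fun _ : Fin d → ℤ => ℂ) 2 →L[ℂ] lp (fun _ : Fin d → ℤ => ℂ) 2) : Set ℂ :=
  {l : ℂ | (∃ f : lp (fun _ : Fin d → ℤ => ℂ) 2, f ≠ 0 ∧ H f = l • f) ∧
    ¬ (l.im = 0 ∧ |l.re| ≤ d)}

open Finset Filter Topology MeasureTheory

/-! ### A determinant bound from the sizes of the columns -/

open scoped ComplexOrder in
/-- Hadamard's inequality for a matrix with entries in the unit disc, `|det M|² ≤ kᵏ`: AM–GM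
applied to the eigenvalues of `M Mᴴ`, whose product is `|det M|²` and whose sum is at most `k²`. -/
theorem norm_det_sq_le {ι : Type*} [Fintype ι] [DecidableEq ι] (M : Matrix ι ι ℂ)
    (h : ∀ i j, ‖M i j‖ ≤ 1) :
    ‖M.det‖ ^ 2 ≤ (Fintype.card ι : ℝ) ^ Fintype.card ι := by
  have hP := Matrix.posSemidef_self_mul_conjTranspose M
  set P := M * M.conjTranspose with hPdef
  have hH := hP.isHermitian
  have hdet : ((‖M.det‖ ^ 2 : ℝ) : ℂ) = ((∏ i, hH.eigenvalues i : ℝ) : ℂ) := by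
    have h1 := hH.det_eq_prod_eigenvalues
    have h2 : P.det = M.det * star M.det := by
      rw [hPdef, Matrix.det_mul, Matrix.det_conjTranspose]
    push_cast
    rw [← Complex.mul_conj']
    exact h2.symm.trans h1
  have hdet' : ‖M.det‖ ^ 2 = ∏ i, hH.eigenvalues i := by exact_mod_cast hdet
  have htr : ((∑ i, hH.eigenvalues i : ℝ) : ℂ) = ((∑ i, ∑ j, ‖M i j‖ ^ 2 : ℝ) : ℂ) := by
    have h1 := hH.trace_eq_sum_eigenvalues
    push_cast
    refine Eq.trans h1.symm ?_
    simp only [hPdef, Matrix.trace, Matrix.diag, Matrix.mul_apply, Matrix.conjTranspose_apply]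
    refine sum_congr rfl fun i _ => sum_congr rfl fun j _ => ?_
    rw [← Complex.mul_conj']; rfl
  have htr' : ∑ i, hH.eigenvalues i ≤ (Fintype.card ι : ℝ) * Fintype.card ι := by
    have : ∑ i, hH.eigenvalues i = ∑ i, ∑ j, ‖M i j‖ ^ 2 := by exact_mod_cast htr
    rw [this]
    calc ∑ i, ∑ j, ‖M i j‖ ^ 2 ≤ ∑ i : ι, ∑ j : ι, (1 : ℝ) := by
          gcongr with i _ j _
          exact pow_le_one₀ (norm_nonneg _) (h i j)
      _ = _ := by simp
  rw [hdet']
  have hnn : ∀ i, 0 ≤ hH.eigenvalues i := hP.eigenvalues_nonneg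
  rcases isEmpty_or_nonempty ι with he | hne
  · simp
  have hk : (0 : ℝ) < Fintype.card ι := by exact_mod_cast Fintype.card_pos
  have := Real.geom_mean_le_arith_mean (univ : Finset ι) (fun _ => 1) hH.eigenvalues
    (fun _ _ => zero_le_one) (by simpa using hk) (fun i _ => hnn i)
  simp only [Real.rpow_one, one_mul, sum_const, card_univ, nsmul_eq_mul, mul_one] at this
  have h2 : (∏ i, hH.eigenvalues i) ^ (Fintype.card ι : ℝ)⁻¹ ≤ Fintype.card ι := by
    refine this.trans ?_
    rw [div_le_iff₀ hk]; exact htr'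
  have h3 := pow_le_pow_left₀ (Real.rpow_nonneg (prod_nonneg fun i _ => hnn i) _) h2 (Fintype.card ι)
  rwa [Real.rpow_inv_natCast_pow (prod_nonneg fun i _ => hnn i) Fintype.card_ne_zero] at h3

/-- Hadamard's inequality when the entries of column `j` are bounded by `b j`. -/
theorem norm_det_le_of_col {ι : Type*} [Fintype ι] [DecidableEq ι] (M : Matrix ι ι ℂ) (b : ι → ℝ)
    (h : ∀ i j, ‖M i j‖ ≤ b j) :
    ‖M.det‖ ≤ (∏ j, b j) * √((Fintype.card ι : ℝ) ^ Fintype.card ι) := by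
  have hb : ∀ j, 0 ≤ b j := fun j => (norm_nonneg _).trans (h j j)
  set N : Matrix ι ι ℂ := Matrix.of fun i j => M i j / b j with hN
  have hMN : M = Matrix.of fun i j => (b j : ℂ) * N i j := by
    ext i j
    by_cases hj : b j = 0
    · have : M i j = 0 := by simpa [hj] using h i j
      simp [this, hj]
    · have : (b j : ℂ) ≠ 0 := by exact_mod_cast hj
      simp only [hN, Matrix.of_apply]
      field_simp
  rw [hMN, Matrix.det_mul_row, norm_mul, norm_prod]
  have hN1 : ‖N.det‖ ≤ √((Fintype.card ι : ℝ) ^ Fintype.card ι) := by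
    apply Real.le_sqrt_of_sq_le
    apply norm_det_sq_le
    intro i j
    simp only [hN, Matrix.of_apply, norm_div, Complex.norm_real, Real.norm_eq_abs, abs_of_nonneg (hb j)]
    exact div_le_one_of_le₀ (h i j) (hb j)
  have : ∏ j, ‖((b j : ℝ) : ℂ)‖ = ∏ j, b j :=
    prod_congr rfl fun j _ => by simp [abs_of_nonneg (hb j)]
  rw [this]
  have := prod_nonneg fun j (_ : j ∈ univ) => hb j
  gcongr

theorem pow_self_le_exp_mul_factorial (k : ℕ) :
    (k : ℝ) ^ k ≤ Real.exp 1 ^ k * k.factorial := by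
  have h := Real.pow_div_factorial_le_exp (k : ℝ) (by positivity) k
  rw [div_le_iff₀ (by positivity)] at h
  rwa [← Real.exp_nat_mul, mul_one]

/-- `k! · e_k(x) ≤ (∑ xᵢ)ᵏ` for the elementary symmetric polynomial `e_k` of nonnegative numbers. -/
theorem esymm_mul_factorial_le {ι : Type*} [DecidableEq ι] (s : Finset ι) (x : ι → ℝ) (hx : ∀ i, 0 ≤ x i)
    (k : ℕ) : (∑ t ∈ s.powersetCard k, ∏ i ∈ t, x i) * k.factorial ≤ (∑ i ∈ s, x i) ^ k := by
  induction s using Finset.induction_on generalizing k with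
  | empty =>
    cases k with
    | zero => simp
    | succ k => rw [powersetCard_eq_empty.2 (by simp)]; simp
  | insert a s ha ih =>
    cases k with
    | zero => simp
    | succ k =>
      rw [powersetCard_succ_insert ha, sum_union, sum_image, sum_insert ha]
      · have h1 : ∑ t ∈ s.powersetCard k, ∏ i ∈ insert a t, x i
            = x a * ∑ t ∈ s.powersetCard k, ∏ i ∈ t, x i := by
          rw [mul_sum]
          refine sum_congr rfl fun t ht => ?_
          rw [prod_insert]
          exact fun hat => ha ((mem_powersetCard.1 ht).1 hat)
        rw [h1]
        have i1 := ih k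
        have i2 := ih (k + 1)
        set S := ∑ i ∈ s, x i
        have hS : 0 ≤ S := sum_nonneg fun i _ => hx i
        have key : S ^ (k+1) + (k + 1) * x a * S ^ k ≤ (x a + S) ^ (k+1) := by
          have hxa := hx a
          clear i1 i2 h1 ih
          induction k with
          | zero => simp [add_comm]
          | succ k ih =>
            calc S ^ (k + 1 + 1) + (((k + 1 : ℕ) : ℝ) + 1) * x a * S ^ (k + 1)
                ≤ (x a + S) * (S ^ (k+1) + (k + 1) * x a * S ^ k) := by
                  have : 0 ≤ (k + 1) * x a ^ 2 * S ^ k := by positivity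
                  push_cast
                  linear_combination this
              _ ≤ (x a + S) * (x a + S) ^ (k+1) := by gcongr
              _ = _ := by ring
        have hfac : ((k+1).factorial : ℝ) = (k + 1) * k.factorial := by
          push_cast [Nat.factorial_succ]; ring
        calc _ = (∑ t ∈ s.powersetCard (k+1), ∏ i ∈ t, x i) * (k+1).factorial
              + (k+1) * x a * ((∑ t ∈ s.powersetCard k, ∏ i ∈ t, x i) * k.factorial) := by
              rw [hfac]; ring
          _ ≤ S ^ (k+1) + (k + 1) * x a * S ^ k := by
              have := hx a
              gcongr
          _ ≤ _ := key
      · intro t ht t' ht' htt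
        have h1 : a ∉ t := fun hat => ha ((mem_powersetCard.1 ht).1 hat)
        have h2 : a ∉ t' := fun hat => ha ((mem_powersetCard.1 ht').1 hat)
        rw [← erase_insert h1, ← erase_insert h2, htt]
      · rw [disjoint_left]
        intro t ht ht'
        obtain ⟨u, _, rfl⟩ := mem_image.1 ht'
        exact ha ((mem_powersetCard.1 ht).1 (mem_insert_self a u))

/-- `det (1 + K)` is the sum of all principal minors of `K`. -/
theorem det_one_add_eq_sum {ι : Type*} [Fintype ι] [DecidableEq ι] (K : Matrix ι ι ℂ) :
    (1 + K).det = ∑ s : Finset ι, (K.submatrix (Subtype.val : s → ι) Subtype.val).det := by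
  have h := (Matrix.detRowAlternating : (ι → ℂ) [⋀^ι]→ₗ[ℂ] ℂ).map_add_univ K.row (1 : Matrix ι ι ℂ).row
  rw [add_comm]
  refine h.trans (sum_congr rfl fun s _ => ?_)
  exact Matrix.det_piecewise_one_eq_submatrix_det K s

/-- The determinant bound behind the exponent `2/3`. If column `j` of `K` is bounded by `c j ^ 3`
and `∑ c j ^ 2 ≤ σ`, then `|det (1 + K)| ≤ exp (e^{1/2} σ^{3/2})`, independently of the size of `K`.
By Hadamard a principal minor of size `k` on `s` is at most `k^{k/2} ∏_{j ∈ s} c j ^ 3`. One factor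
`∏_{j ∈ s} c j` is bounded by the square root of the elementary symmetric polynomial
`e_k = e_k(c²) ≤ σᵏ / k!`, and this square root absorbs `k^{k/2}`; the remaining
`∏_{j ∈ s} c j ^ 2` sum to `e_k`, so the minors of size `k` contribute at most
`(e^{1/2} σ^{3/2})ᵏ / k!`. -/
theorem norm_det_one_add_le {ι : Type*} [Fintype ι] [DecidableEq ι] (K : Matrix ι ι ℂ) (c : ι → ℝ)
    (hc : ∀ j, 0 ≤ c j) (h : ∀ i j, ‖K i j‖ ≤ c j ^ 3) (σ : ℝ) (hσ : ∑ j, c j ^ 2 ≤ σ) :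
    ‖(1 + K).det‖ ≤ Real.exp (√(Real.exp 1 * σ) * σ) := by
  have hσ0 : 0 ≤ σ := (sum_nonneg fun j _ => sq_nonneg (c j)).trans hσ
  have key : ∀ k : ℕ, ∑ s ∈ (univ : Finset ι).powersetCard k,
      ‖(K.submatrix (Subtype.val : s → ι) Subtype.val).det‖
      ≤ (√(Real.exp 1 * σ) * σ) ^ k / k.factorial := by
    intro k
    set A := univ.powersetCard k (α := ι)
    set E := ∑ s ∈ A, ∏ j ∈ s, c j ^ 2 with hE
    have hk : (0 : ℝ) < k.factorial := by positivity
    have hEb : E * k.factorial ≤ σ ^ k :=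
      (esymm_mul_factorial_le univ (fun j => c j ^ 2) (fun j => sq_nonneg _) k).trans
        (pow_le_pow_left₀ (sum_nonneg fun j _ => sq_nonneg (c j)) hσ k)
    have hE0 : 0 ≤ E := sum_nonneg fun s _ => prod_nonneg fun j _ => sq_nonneg _
    have h1 : ∀ s ∈ A, ‖(K.submatrix (Subtype.val : s → ι) Subtype.val).det‖
        ≤ √E * √((k : ℝ) ^ k) * ∏ j ∈ s, c j ^ 2 := by
      intro s hs
      have hcard : s.card = k := (mem_powersetCard.1 hs).2
      have := norm_det_le_of_col (K.submatrix (Subtype.val : s → ι) Subtype.val)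
        (fun j => c j ^ 3) (fun i j => h i j)
      rw [Fintype.card_coe, hcard, prod_coe_sort s (fun j => c j ^ 3)] at this
      refine this.trans ?_
      -- The squared product is a single term of the sum `E` of nonnegative terms.
      have hX : ∏ j ∈ s, c j ≤ √E := by
        apply Real.le_sqrt_of_sq_le
        rw [← prod_pow]
        exact single_le_sum (f := fun s => ∏ j ∈ s, c j ^ 2)
          (fun s _ => prod_nonneg fun j _ => sq_nonneg _) hs
      have hX0 : 0 ≤ ∏ j ∈ s, c j := prod_nonneg fun j _ => hc j
      rw [prod_pow, prod_pow]
      calc (∏ j ∈ s, c j) ^ 3 * √((k : ℝ) ^ k) = (∏ j ∈ s, c j) * (√((k : ℝ) ^ k) * (∏ j ∈ s, c j) ^ 2) := by ring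
        _ ≤ √E * (√((k : ℝ) ^ k) * (∏ j ∈ s, c j) ^ 2) := by gcongr
        _ = _ := by ring
    calc _ ≤ ∑ s ∈ A, √E * √((k : ℝ) ^ k) * ∏ j ∈ s, c j ^ 2 := sum_le_sum h1
      _ = √(E * (k : ℝ) ^ k) * E := by rw [← mul_sum, Real.sqrt_mul hE0]
      _ ≤ √((Real.exp 1 * σ) ^ k) * (σ ^ k / k.factorial) := by
          gcongr
          · calc E * (k : ℝ) ^ k ≤ E * (Real.exp 1 ^ k * k.factorial) := by
                  gcongr; exact pow_self_le_exp_mul_factorial k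
              _ = Real.exp 1 ^ k * (E * k.factorial) := by ring
              _ ≤ Real.exp 1 ^ k * σ ^ k := by gcongr
              _ = _ := by rw [mul_pow]
          · rwa [le_div_iff₀ hk]
      _ = _ := by
          have : √((Real.exp 1 * σ) ^ k) = √(Real.exp 1 * σ) ^ k := by
            rw [Real.sqrt_eq_iff_mul_self_eq (by positivity) (by positivity), ← mul_pow,
              Real.mul_self_sqrt (by positivity)]
          rw [this]; ring
  rw [det_one_add_eq_sum]
  calc _ ≤ ∑ s : Finset ι, ‖(K.submatrix (Subtype.val : s → ι) Subtype.val).det‖ := norm_sum_le _ _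
    _ = ∑ k ∈ range (Fintype.card ι + 1), ∑ s ∈ (univ : Finset ι).powersetCard k,
          ‖(K.submatrix (Subtype.val : s → ι) Subtype.val).det‖ := by
        rw [← powerset_univ, sum_powerset, card_univ]
    _ ≤ ∑ k ∈ range (Fintype.card ι + 1), (√(Real.exp 1 * σ) * σ) ^ k / k.factorial :=
        sum_le_sum fun k _ => key k
    _ ≤ _ := Real.sum_le_exp_of_nonneg (by positivity) _

/-! ### Zeros of bounded analytic functions in the disc -/

/-- Dividing a bounded analytic function on the disc by the Blaschke factor
`(z - a) / (1 - conj a * z)` of one of its zeros does not increase the sup bound. -/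
theorem exists_blaschke_quotient {h : ℂ → ℂ} {M : ℝ} {a : ℂ} (ha : a ∈ Metric.ball (0 : ℂ) 1)
    (hd : DifferentiableOn ℂ h (Metric.ball 0 1)) (hM : ∀ z ∈ Metric.ball (0 : ℂ) 1, ‖h z‖ ≤ M)
    (h0 : h a = 0) :
    ∃ g : ℂ → ℂ, DifferentiableOn ℂ g (Metric.ball 0 1) ∧
      (∀ z ∈ Metric.ball (0 : ℂ) 1, ‖g z‖ ≤ M) ∧
      ∀ z, h z * (1 - starRingEnd ℂ a * z) = (z - a) * g z := by
  have hM0 : 0 ≤ M := (norm_nonneg _).trans (hM a ha)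
  have han : ‖a‖ < 1 := by simpa using ha
  have hsl : ∀ z, (z - a) * dslope h a z = h z := fun z => by
    have := sub_smul_dslope h a z
    rw [h0, sub_zero] at this
    exact this
  set g : ℂ → ℂ := fun z => dslope h a z * (1 - starRingEnd ℂ a * z) with hg
  have hgd : DifferentiableOn ℂ g (Metric.ball 0 1) := by
    refine DifferentiableOn.mul ?_ (by fun_prop)
    exact (Complex.differentiableOn_dslope (Metric.isOpen_ball.mem_nhds ha)).2 hd
  have hgm : ∀ z, h z * (1 - starRingEnd ℂ a * z) = (z - a) * g z := fun z => by
    rw [hg, ← hsl z]; ring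
  refine ⟨g, hgd, ?_, hgm⟩
  intro w hw
  have hwn : ‖w‖ < 1 := by simpa using hw
  -- The maximum principle on `|z| ≤ r`, where on `|z| = r` the Blaschke factor is nearly unimodular:
  -- `|1 - conj a * z|² = |z - a|² + (1 - |a|²)(1 - r²)`; then `r → 1`.
  have hr : ∀ᶠ r in 𝓝[<] (1 : ℝ), ‖g w‖ ^ 2 ≤ M ^ 2 * (1 + (1 - r ^ 2) / (r - ‖a‖) ^ 2) := by
    filter_upwards [Ioo_mem_nhdsLT (max_lt han hwn)] with r ⟨hr1, hr2⟩
    have hra : ‖a‖ < r := (le_max_left _ _).trans_lt hr1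
    have hrw : ‖w‖ < r := (le_max_right _ _).trans_lt hr1
    have hr0 : 0 < r := (norm_nonneg _).trans_lt hra
    set c := M ^ 2 * (1 + (1 - r ^ 2) / (r - ‖a‖) ^ 2) with hc
    have hq0 : 0 ≤ (1 - r ^ 2) := by nlinarith
    have hc0 : 0 ≤ c := by positivity
    have hsph : ∀ z ∈ Metric.sphere (0 : ℂ) r, ‖g z‖ ≤ √c := by
      intro z hz
      have hzr : ‖z‖ = r := by simpa using hz
      have hzb : z ∈ Metric.ball (0 : ℂ) 1 := by simpa [hzr] using hr2
      apply Real.le_sqrt_of_sq_le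
      have hza : r - ‖a‖ ≤ ‖z - a‖ := by rw [← hzr]; exact norm_sub_norm_le z a
      have hpos : 0 < ‖z - a‖ := by linarith
      have hid : ‖1 - starRingEnd ℂ a * z‖ ^ 2 = ‖z - a‖ ^ 2 + (1 - ‖a‖ ^ 2) * (1 - r ^ 2) := by
        rw [← hzr]
        simp only [← Complex.normSq_eq_norm_sq, Complex.normSq_apply]
        simp
        ring
      have e := congrArg (fun x => ‖x‖ ^ 2) (hgm z)
      simp only [norm_mul, mul_pow] at e
      rw [hid] at e
      have hhM := pow_le_pow_left₀ (norm_nonneg _) (hM z hzb) 2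
      have hge : ‖g z‖ ^ 2 = ‖h z‖ ^ 2 * (1 + (1 - ‖a‖ ^ 2) * (1 - r ^ 2) / ‖z - a‖ ^ 2) := by
        field_simp
        linarith
      rw [hge, hc]
      have h1 : (1 - ‖a‖ ^ 2) * (1 - r ^ 2) ≤ 1 - r ^ 2 := by nlinarith [sq_nonneg ‖a‖]
      have h2 : 0 < r - ‖a‖ := by linarith
      have h3 : 0 ≤ 1 - ‖a‖ ^ 2 := by nlinarith [norm_nonneg a]
      gcongr
    have := Complex.norm_le_of_forall_mem_frontier_norm_le (U := Metric.ball (0 : ℂ) r)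
      Metric.isBounded_ball (f := g) (C := √c) (z := w)
      (DifferentiableOn.diffContOnCl_ball hgd
        (Metric.closedBall_subset_ball hr2))
      (fun z hz => hsph z (Metric.frontier_ball_subset_sphere hz))
      (subset_closure (by simpa using hrw))
    calc ‖g w‖ ^ 2 ≤ √c ^ 2 := by gcongr
      _ = c := Real.sq_sqrt hc0
  have hlim : Tendsto (fun r : ℝ => M ^ 2 * (1 + (1 - r ^ 2) / (r - ‖a‖) ^ 2)) (𝓝[<] 1)
      (𝓝 (M ^ 2 * (1 + (1 - 1 ^ 2) / (1 - ‖a‖) ^ 2))) := by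
    have : (1 - ‖a‖) ^ 2 ≠ 0 := by have : 0 < 1 - ‖a‖ := by linarith
                                   positivity
    have hca : ContinuousAt (fun r : ℝ => M ^ 2 * (1 + (1 - r ^ 2) / (r - ‖a‖) ^ 2)) 1 := by
      fun_prop (disch := assumption)
    exact hca.tendsto.mono_left nhdsWithin_le_nhds
  have hfin := ge_of_tendsto hlim hr
  simp at hfin
  exact (sq_le_sq₀ (norm_nonneg _) hM0).1 (by linarith)

/-- Jensen's inequality for finitely many distinct zeros in the disc. -/
theorem norm_zero_le_mul_prod_zeros (S : Finset ℂ) : ∀ {h : ℂ → ℂ} {M : ℝ},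
    DifferentiableOn ℂ h (Metric.ball 0 1) → (∀ z ∈ Metric.ball (0 : ℂ) 1, ‖h z‖ ≤ M) →
    (∀ a ∈ S, a ∈ Metric.ball (0 : ℂ) 1) → (∀ a ∈ S, h a = 0) →
    ‖h 0‖ ≤ M * ∏ a ∈ S, ‖a‖ := by
  induction S using Finset.induction_on with
  | empty => intro h M _ hM _ _; simpa using hM 0 (by simp)
  | insert a S haS ih =>
    intro h M hd hM hS hz
    obtain ⟨g, hgd, hgM, hgm⟩ := exists_blaschke_quotient (hS a (mem_insert_self _ _)) hd hM
      (hz a (mem_insert_self _ _))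
    have h1 := ih hgd hgM (fun b hb => hS b (mem_insert_of_mem hb)) (fun b hb => by
      have := hgm b
      rw [hz b (mem_insert_of_mem hb), zero_mul] at this
      have hne : b - a ≠ 0 := sub_ne_zero.2 fun hba => haS (hba ▸ hb)
      exact (mul_eq_zero.1 this.symm).resolve_left hne)
    have h2 := hgm 0
    simp only [mul_zero, sub_zero, mul_one, zero_sub] at h2
    rw [h2, norm_mul, norm_neg, prod_insert haS]
    calc ‖a‖ * ‖g 0‖ ≤ ‖a‖ * (M * ∏ a ∈ S, ‖a‖) := by gcongr
      _ = _ := by ring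

/-- Blaschke-type bound for points that are zeros only in the limit. If the functions `D i` are
analytic on the disc with `|D i| ≤ exp M` and `D i 0 = 1`, and `D i a → 0` for each `a ∈ S`, then
`∑ (1 - |a|) ≤ M`. Subtracting the Lagrange polynomial interpolating `D i` on `S` gives exact zeros
at the cost of an error that tends to `0`. -/
theorem sum_one_sub_norm_le {ι : Type*} {l : Filter ι} [l.NeBot] (D : ι → ℂ → ℂ) (M : ℝ)
    (S : Finset ℂ) (hS : ∀ a ∈ S, a ∈ Metric.ball (0 : ℂ) 1)
    (hd : ∀ i, DifferentiableOn ℂ (D i) (Metric.ball 0 1))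
    (hM : ∀ i, ∀ z ∈ Metric.ball (0 : ℂ) 1, ‖D i z‖ ≤ Real.exp M)
    (h1 : ∀ i, D i 0 = 1) (h0 : ∀ a ∈ S, Tendsto (fun i => D i a) l (𝓝 0)) :
    ∑ a ∈ S, (1 - ‖a‖) ≤ M := by
  classical
  have hb : ∀ a : ℂ, ∃ C : ℝ, ∀ z ∈ Metric.closedBall (0 : ℂ) 1,
      ‖(Lagrange.basis S id a).eval z‖ ≤ C := fun a =>
    (isCompact_closedBall (0 : ℂ) 1).exists_bound_of_continuousOn
      (Polynomial.continuous _).continuousOn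
  choose C hC using hb
  set η : ι → ℝ := fun i => ∑ a ∈ S, ‖D i a‖ * C a with hη
  have hηlim : Tendsto η l (𝓝 0) := by
    have : Tendsto η l (𝓝 (∑ a ∈ S, ‖(0 : ℂ)‖ * C a)) :=
      tendsto_finsetSum _ fun a ha => ((h0 a ha).norm).mul_const _
    simpa using this
  have hi : ∀ i, 1 - η i ≤ (Real.exp M + η i) * ∏ a ∈ S, ‖a‖ := by
    intro i
    set P : ℂ → ℂ := fun z => ∑ a ∈ S, D i a * (Lagrange.basis S id a).eval z with hP
    have hPb : ∀ z ∈ Metric.closedBall (0 : ℂ) 1, ‖P z‖ ≤ η i := fun z hz =>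
      (norm_sum_le _ _).trans (sum_le_sum fun a _ => by
        rw [norm_mul]
        exact mul_le_mul_of_nonneg_left (hC a z hz) (norm_nonneg _))
    have hPz : ∀ b ∈ S, P b = D i b := by
      intro b hb
      rw [hP]
      simp only
      rw [sum_eq_single_of_mem b hb]
      · have := Lagrange.eval_basis_self (v := (id : ℂ → ℂ)) (Set.injOn_id _) hb
        simp only [id] at this
        rw [this, mul_one]
      · intro a _ hab
        have := Lagrange.eval_basis_of_ne (v := (id : ℂ → ℂ)) hab hb
        simp only [id] at this
        rw [this, mul_zero]
    have key := norm_zero_le_mul_prod_zeros S (h := fun z => D i z - P z)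
      (M := Real.exp M + η i)
      ((hd i).sub (Differentiable.differentiableOn (by rw [hP]; fun_prop)))
      (fun z hz => (norm_sub_le _ _).trans
        (add_le_add (hM i z hz) (hPb z (Metric.ball_subset_closedBall hz))))
      hS (fun a ha => by simp [hPz a ha])
    refine le_trans ?_ key
    have h2 := hPb 0 (by simp)
    have h3 := norm_sub_norm_le (1 : ℂ) (P 0)
    rw [norm_one] at h3
    simp only [h1]
    linarith
  have hlim1 : Tendsto (fun i => 1 - η i) l (𝓝 (1 - 0)) := tendsto_const_nhds.sub hηlim
  have hlim2 : Tendsto (fun i => (Real.exp M + η i) * ∏ a ∈ S, ‖a‖) l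
      (𝓝 ((Real.exp M + 0) * ∏ a ∈ S, ‖a‖)) := (tendsto_const_nhds.add hηlim).mul_const _
  have hfin := le_of_tendsto_of_tendsto' hlim1 hlim2 hi
  simp only [sub_zero, add_zero] at hfin
  -- In the limit `1 ≤ exp M * ∏ |a|`, and `|a| ≤ exp (|a| - 1)`.
  have hprod : ∏ a ∈ S, ‖a‖ ≤ Real.exp (∑ a ∈ S, (‖a‖ - 1)) := by
    rw [Real.exp_sum]
    refine prod_le_prod (fun _ _ => norm_nonneg _) fun a _ => ?_
    linarith [Real.add_one_le_exp (‖a‖ - 1)]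
  have h4 : (1 : ℝ) ≤ Real.exp (M + ∑ a ∈ S, (‖a‖ - 1)) := by
    rw [Real.exp_add]
    exact hfin.trans (by gcongr)
  have h5 := Real.one_le_exp_iff.1 h4
  have h6 : ∑ a ∈ S, (1 - ‖a‖) = - ∑ a ∈ S, (‖a‖ - 1) := by
    rw [← sum_neg_distrib]; simp
  linarith

/-! ### Bessel functions of integer order -/

/-- The Bessel function `J_n` of integer order, through Bessel's integral over `[0, π]`. -/
noncomputable def bessel (n : ℤ) (t : ℝ) : ℝ :=
  Real.pi⁻¹ * ∫ θ in (0 : ℝ)..Real.pi, Real.cos (n * θ - t * Real.sin θ)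

theorem bessel_abs_le_one (n : ℤ) (t : ℝ) : |bessel n t| ≤ 1 := by
  have h := intervalIntegral.norm_integral_le_of_norm_le_const (a := 0) (b := Real.pi) (C := 1)
    (f := fun θ => Real.cos (n * θ - t * Real.sin θ)) (fun θ _ => Real.abs_cos_le_one _)
  rw [sub_zero, one_mul, abs_of_pos Real.pi_pos, Real.norm_eq_abs] at h
  rw [bessel, abs_mul, abs_of_pos (inv_pos.2 Real.pi_pos), inv_mul_le_iff₀ Real.pi_pos, mul_one]
  exact h

theorem bessel_hasDerivAt (n : ℤ) (t : ℝ) :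
    HasDerivAt (bessel n) ((bessel (n - 1) t - bessel (n + 1) t) / 2) t := by
  have h := (intervalIntegral.hasDerivAt_integral_of_dominated_loc_of_deriv_le
    (μ := volume) (a := 0) (b := Real.pi) (s := Set.univ) (x₀ := t) (bound := fun _ => 1)
    (F := fun t θ => Real.cos (n * θ - t * Real.sin θ))
    (F' := fun t θ => Real.sin (n * θ - t * Real.sin θ) * Real.sin θ)
    Filter.univ_mem
    (Eventually.of_forall fun s => (by fun_prop : Continuous fun θ =>
      Real.cos (n * θ - s * Real.sin θ)).aestronglyMeasurable)
    ((by fun_prop : Continuous fun θ => Real.cos (n * θ - t * Real.sin θ)).intervalIntegrable _ _)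
    ((by fun_prop : Continuous fun θ =>
      Real.sin (n * θ - t * Real.sin θ) * Real.sin θ).aestronglyMeasurable)
    (Eventually.of_forall fun θ _ s _ => by
      rw [norm_mul]
      exact mul_le_one₀ (Real.abs_sin_le_one _) (norm_nonneg _) (Real.abs_sin_le_one _))
    (by simp)
    (Eventually.of_forall fun θ _ s _ => by
      have h1 : HasDerivAt (fun s : ℝ => (n : ℝ) * θ - s * Real.sin θ) (-Real.sin θ) s := by
        simpa using ((hasDerivAt_id s).mul_const (Real.sin θ)).const_sub ((n : ℝ) * θ)
      have h2 := h1.cos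
      exact h2.congr_deriv (by ring))).2
  have h3 := h.const_mul Real.pi⁻¹
  refine h3.congr_deriv ?_
  rw [bessel, bessel, ← mul_sub, ← intervalIntegral.integral_sub
    ((by fun_prop : Continuous _).intervalIntegrable _ _)
    ((by fun_prop : Continuous _).intervalIntegrable _ _), mul_div_assoc,
    ← intervalIntegral.integral_div]
  congr 1
  refine intervalIntegral.integral_congr fun θ _ => ?_
  have e1 : ((n - 1 : ℤ) : ℝ) * θ - t * Real.sin θ = (n * θ - t * Real.sin θ) - θ := by
    push_cast; ring
  have e2 : ((n + 1 : ℤ) : ℝ) * θ - t * Real.sin θ = (n * θ - t * Real.sin θ) + θ := by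
    push_cast; ring
  rw [e1, e2]
  generalize (n : ℝ) * θ - t * Real.sin θ = φ
  rw [Real.cos_sub, Real.cos_add]
  ring

theorem bessel_continuous (n : ℤ) : Continuous (bessel n) :=
  continuous_iff_continuousAt.2 fun t => (bessel_hasDerivAt n t).continuousAt

theorem bessel_phase_hasDerivAt (n : ℤ) (t θ : ℝ) :
    HasDerivAt (fun θ : ℝ => (n : ℝ) * θ - t * Real.sin θ) (n - t * Real.cos θ) θ := by
  exact (((hasDerivAt_id θ).const_mul (n : ℝ)).sub
    ((Real.hasDerivAt_sin θ).const_mul t)).congr_deriv (by simp)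

theorem bessel_recurrence (n : ℤ) (t : ℝ) :
    2 * n * bessel n t = t * (bessel (n - 1) t + bessel (n + 1) t) := by
  have hint : ∫ θ in (0 : ℝ)..Real.pi,
      Real.cos (n * θ - t * Real.sin θ) * (n - t * Real.cos θ) = 0 := by
    rw [intervalIntegral.integral_eq_sub_of_hasDerivAt
      (f := fun θ => Real.sin (n * θ - t * Real.sin θ))
      (fun θ _ => (bessel_phase_hasDerivAt n t θ).sin)
      ((by fun_prop : Continuous _).intervalIntegrable _ _)]
    simp [Real.sin_int_mul_pi]
  have hsum : 2 * n * bessel n t - t * (bessel (n - 1) t + bessel (n + 1) t)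
      = 2 * Real.pi⁻¹ * ∫ θ in (0 : ℝ)..Real.pi,
        Real.cos (n * θ - t * Real.sin θ) * (n - t * Real.cos θ) := by
    have : ∀ θ : ℝ, Real.cos (n * θ - t * Real.sin θ) * (n - t * Real.cos θ)
        = n * Real.cos (n * θ - t * Real.sin θ)
          - t / 2 * (Real.cos ((n - 1 : ℤ) * θ - t * Real.sin θ)
            + Real.cos ((n + 1 : ℤ) * θ - t * Real.sin θ)) := by
      intro θ
      have e1 : ((n - 1 : ℤ) : ℝ) * θ - t * Real.sin θ = (n * θ - t * Real.sin θ) - θ := by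
        push_cast; ring
      have e2 : ((n + 1 : ℤ) : ℝ) * θ - t * Real.sin θ = (n * θ - t * Real.sin θ) + θ := by
        push_cast; ring
      rw [e1, e2]
      generalize (n : ℝ) * θ - t * Real.sin θ = φ
      rw [Real.cos_sub, Real.cos_add]
      ring
    simp_rw [this]
    rw [intervalIntegral.integral_sub ((by fun_prop : Continuous _).intervalIntegrable _ _)
      ((by fun_prop : Continuous _).intervalIntegrable _ _),
      intervalIntegral.integral_const_mul, intervalIntegral.integral_const_mul,
      intervalIntegral.integral_add ((by fun_prop : Continuous _).intervalIntegrable _ _)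
      ((by fun_prop : Continuous _).intervalIntegrable _ _)]
    simp only [bessel]
    ring
  rw [hint, mul_zero] at hsum
  linarith

theorem bessel_zero (n : ℤ) : bessel n 0 = if n = 0 then 1 else 0 := by
  split_ifs with hn
  · simp [bessel, hn, Real.pi_ne_zero]
  · have hn' : (n : ℝ) ≠ 0 := by exact_mod_cast hn
    simp [bessel, Real.sin_int_mul_pi, hn', intervalIntegral.integral_comp_mul_left]

theorem bessel_neg_arg (n : ℤ) (t : ℝ) : bessel n (-t) = bessel (-n) t := by
  simp only [bessel]
  congr 1
  refine intervalIntegral.integral_congr fun θ _ => ?_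
  rw [← Real.cos_neg]
  congr 1
  push_cast; ring

theorem bessel_neg_order_abs (n : ℤ) (t : ℝ) : |bessel (-n) t| = |bessel n t| := by
  have h : bessel (-n) t = (-1) ^ n.natAbs * bessel n t := by
    simp only [bessel]
    have := intervalIntegral.integral_comp_sub_left
      (fun θ : ℝ => Real.cos ((-n : ℤ) * θ - t * Real.sin θ)) (a := 0) (b := Real.pi) Real.pi
    simp only [sub_self, sub_zero] at this
    rw [← this, mul_left_comm, ← intervalIntegral.integral_const_mul ((-1) ^ n.natAbs : ℝ)]
    congr 1
    refine intervalIntegral.integral_congr fun θ _ => ?_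
    simp only [Real.sin_pi_sub]
    have e : ((-n : ℤ) : ℝ) * (Real.pi - θ) - t * Real.sin θ
      = (n * θ - t * Real.sin θ) - n * Real.pi := by push_cast; ring
    rw [e, Real.cos_sub_int_mul_pi]
    congr 1
    rcases Int.even_or_odd n with h | h
    · rw [h.neg_one_zpow, (Int.natAbs_even.2 h).neg_one_pow]
    · rw [h.neg_one_zpow, (Int.natAbs_odd.2 h).neg_one_pow]
  rw [h, abs_mul, abs_pow]
  simp

theorem bessel_abs_natAbs (n : ℤ) (t : ℝ) : |bessel n t| = |bessel (n.natAbs : ℤ) t| := by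
  rcases Int.natAbs_eq n with h | h
  · rw [← h]
  · conv_lhs => rw [h]
    rw [bessel_neg_order_abs]

/-- Decay below the turning point: `|J_n(t)| ≤ 1 / (n - t)` for `0 ≤ t < n`. The phase
`nθ - t sin θ` has derivative at least `n - t > 0`, so one integration by parts suffices; its
reciprocal is monotone on `[0, π]`. -/
theorem bessel_abs_le_of_lt (n : ℤ) (t : ℝ) (ht : 0 ≤ t) (htn : t < n) :
    |bessel n t| ≤ 1 / (n - t) := by
  have hpos : ∀ θ, 0 < n - t * Real.cos θ := fun θ => by
    nlinarith [Real.cos_le_one θ, Real.neg_one_le_cos θ]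
  have hphi : ∀ θ, HasDerivAt (fun θ => (n - t * Real.cos θ)⁻¹)
      (-(t * Real.sin θ) / (n - t * Real.cos θ) ^ 2) θ := fun θ => by
    have : HasDerivAt (fun θ => (n : ℝ) - t * Real.cos θ) (t * Real.sin θ) θ := by
      simpa using ((Real.hasDerivAt_cos θ).const_mul t).const_sub (n : ℝ)
    exact this.inv (hpos θ).ne'
  have hcont : Continuous fun θ => -(t * Real.sin θ) / (n - t * Real.cos θ) ^ 2 := by
    refine Continuous.div (by fun_prop) (by fun_prop) fun θ => ?_
    exact (pow_pos (hpos θ) 2).ne'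
  have hparts := intervalIntegral.integral_mul_deriv_eq_deriv_mul (a := 0) (b := Real.pi)
    (u := fun θ => (n - t * Real.cos θ)⁻¹)
    (v := fun θ => Real.sin (n * θ - t * Real.sin θ))
    (fun θ _ => hphi θ)
    (fun θ _ => (bessel_phase_hasDerivAt n t θ).sin)
    (hcont.intervalIntegrable _ _)
    ((by fun_prop : Continuous _).intervalIntegrable _ _)
  have hl : ∀ θ : ℝ, (n - t * Real.cos θ)⁻¹ *
      (Real.cos (n * θ - t * Real.sin θ) * (n - t * Real.cos θ))
      = Real.cos (n * θ - t * Real.sin θ) := fun θ => by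
    have := (hpos θ).ne'
    field_simp
  simp_rw [hl] at hparts
  simp only [Real.sin_pi, mul_zero, sub_zero, Real.sin_int_mul_pi, Real.sin_zero, zero_sub]
    at hparts
  have hbd : |∫ θ in (0 : ℝ)..Real.pi, Real.cos (n * θ - t * Real.sin θ)|
      ≤ 1 / (n - t) := by
    rw [hparts, abs_neg]
    have h1 : |∫ θ in (0 : ℝ)..Real.pi, -(t * Real.sin θ) / (n - t * Real.cos θ) ^ 2 *
        Real.sin (n * θ - t * Real.sin θ)|
        ≤ ∫ θ in (0 : ℝ)..Real.pi, -(-(t * Real.sin θ) / (n - t * Real.cos θ) ^ 2) := by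
      rw [← Real.norm_eq_abs]
      refine intervalIntegral.norm_integral_le_of_norm_le (μ := volume) Real.pi_pos.le ?_
        (Continuous.intervalIntegrable (μ := volume) (hcont.neg) _ _)
      refine Eventually.of_forall fun θ hθ => ?_
      have hs : 0 ≤ Real.sin θ := Real.sin_nonneg_of_nonneg_of_le_pi hθ.1.le hθ.2
      have h2 : 0 ≤ t * Real.sin θ / (n - t * Real.cos θ) ^ 2 := by positivity
      rw [neg_div, neg_neg, norm_mul, norm_neg, Real.norm_of_nonneg h2]
      exact mul_le_of_le_one_right h2 (Real.abs_sin_le_one _)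
    refine h1.trans ?_
    rw [intervalIntegral.integral_neg, intervalIntegral.integral_eq_sub_of_hasDerivAt
      (fun θ _ => hphi θ) (hcont.intervalIntegrable _ _)]
    have h3 : (0 : ℝ) ≤ (n - t * Real.cos Real.pi)⁻¹ := (inv_pos.2 (hpos _)).le
    simp only [Real.cos_zero, mul_one, one_div]
    linarith
  rw [bessel, abs_mul, abs_of_pos (inv_pos.2 Real.pi_pos)]
  have : Real.pi⁻¹ ≤ 1 := inv_le_one_of_one_le₀ (by linarith [Real.pi_gt_three])
  have h0 : 0 ≤ |∫ θ in (0 : ℝ)..Real.pi, Real.cos (n * θ - t * Real.sin θ)| := abs_nonneg _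
  nlinarith

/-- With `A = J_n(t)` and `B = J_{n+1}(t)`,
`t (A² + B²) - (2 n + 1) A B + (n + 1/2) A² / t`. With `u = √t J_n` this is the energy
`u'² + (1 - (n² - 1/4) / t²) u²` of Bessel's equation `u'' + (1 - (n² - 1/4) / t²) u = 0`. -/
noncomputable def besselEnergy (n : ℕ) (t : ℝ) : ℝ :=
  t * (bessel n t ^ 2 + bessel (n + 1) t ^ 2) - (2 * n + 1) * (bessel n t * bessel (n + 1) t)
    + (n + 1 / 2) * bessel n t ^ 2 / t

/-- The energy is decreasing for `n = 0` and increasing for `n ≥ 1`. -/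
theorem besselEnergy_hasDerivAt (n : ℕ) (t : ℝ) (ht : 0 < t) :
    HasDerivAt (besselEnergy n) (2 * (n ^ 2 - 1 / 4) * bessel n t ^ 2 / t ^ 2) t := by
  have hA := bessel_hasDerivAt n t
  have hB := bessel_hasDerivAt (n + 1) t
  have r1 := bessel_recurrence n t
  have r2 := bessel_recurrence (n + 1) t
  rw [add_sub_cancel_right] at hB r2
  set A := bessel n t with hAdef
  set B := bessel (n + 1) t with hBdef
  set P := bessel ((n : ℤ) - 1) t
  set Q := bessel ((n : ℤ) + 1 + 1) t
  push_cast at r1 r2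
  -- The recurrence expresses the derivatives of `J_n` and `J_{n+1}` through these two functions.
  have hP : P = 2 * n * A / t - B := by field_simp; linarith
  have hQ : Q = 2 * (n + 1) * B / t - A := by field_simp; linarith
  have hA2 := hA.pow 2
  have hB2 := hB.pow 2
  have hfin := (((hasDerivAt_id t).mul (hA2.add hB2)).sub
    ((hA.mul hB).const_mul (2 * (n : ℝ) + 1))).add
    ((hA2.const_mul ((n : ℝ) + 1 / 2)).div (hasDerivAt_id t) ht.ne')
  refine hfin.congr_deriv ?_
  simp only [Pi.pow_apply, Pi.add_apply, id, ← hAdef, ← hBdef, Nat.cast_ofNat, Nat.add_one_sub_one, pow_one]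
  rw [hP, hQ]
  field_simp
  ring

/-- The energy of `J_0` decreases on `[1, ∞)` and is bounded at `t = 1`. -/
theorem besselEnergy_zero_bound (t : ℝ) (ht : 1 ≤ t) :
    t * (bessel 0 t ^ 2 + bessel 1 t ^ 2) ≤ 5 := by
  have hanti : AntitoneOn (besselEnergy 0) (Set.Ici 1) := by
    refine antitoneOn_of_deriv_nonpos (convex_Ici 1) ?_ ?_ ?_
    · intro s hs
      exact (besselEnergy_hasDerivAt 0 s (by linarith [Set.mem_Ici.1 hs])).continuousAt.continuousWithinAt
    · intro s hs
      rw [interior_Ici] at hs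
      exact (besselEnergy_hasDerivAt 0 s (by linarith [Set.mem_Ioi.1 hs])).differentiableAt.differentiableWithinAt
    · intro s hs
      rw [interior_Ici] at hs
      rw [(besselEnergy_hasDerivAt 0 s (by linarith [Set.mem_Ioi.1 hs])).deriv]
      have : 0 ≤ bessel (0 : ℕ) s ^ 2 / s ^ 2 := by positivity
      push_cast at this ⊢
      have e : 2 * ((0 : ℝ) ^ 2 - 1 / 4) * bessel 0 s ^ 2 / s ^ 2 = -(1/2) * (bessel 0 s ^ 2 / s ^ 2) := by ring
      rw [e]; linarith
  have h := hanti (Set.mem_Ici.2 le_rfl) (Set.mem_Ici.2 ht) ht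
  simp only [besselEnergy, Nat.cast_zero, zero_add, mul_zero, one_mul, div_one] at h
  have sq : ∀ n s, bessel n s ^ 2 ≤ 1 := fun n s => by
    rw [← sq_abs]; exact pow_le_one₀ (abs_nonneg _) (bessel_abs_le_one n s)
  have h1 := sq 0 1
  have h2 := sq 1 1
  have h3 := sq 0 t
  have h4 := sq 1 t
  have h5 : 0 ≤ 1 / 2 * bessel 0 t ^ 2 / t := by positivity
  nlinarith [sq_nonneg (bessel 0 1 + bessel 1 1), sq_nonneg (bessel 0 t - bessel 1 t)]

/-- All `J_n` tend to `0` at infinity: `J_0` and `J_1` by the energy bound, the others by the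
recurrence. Consecutive orders are paired to make the induction go through. -/
theorem bessel_tendsto_zero (n : ℕ) :
    Tendsto (bessel n) atTop (𝓝 0) ∧ Tendsto (bessel (n + 1)) atTop (𝓝 0) := by
  induction n with
  | zero =>
    have key : ∀ f : ℝ → ℝ, (∀ t, 1 ≤ t → t * f t ^ 2 ≤ 5) → Tendsto f atTop (𝓝 0) := by
      intro f hf
      have h1 : Tendsto (fun t => f t ^ 2) atTop (𝓝 0) := by
        refine tendsto_of_tendsto_of_tendsto_of_le_of_le' tendsto_const_nhds
          (tendsto_const_nhds (x := (5 : ℝ)).div_atTop tendsto_id)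
          (Eventually.of_forall fun t => sq_nonneg _) ?_
        filter_upwards [eventually_ge_atTop 1] with t ht
        rw [le_div_iff₀ (by simp; linarith)]
        simpa [mul_comm] using hf t ht
      have h2 := h1.sqrt
      simp only [Real.sqrt_sq_eq_abs, Real.sqrt_zero] at h2
      exact tendsto_zero_iff_abs_tendsto_zero _ |>.2 h2
    constructor
    · refine key _ fun t ht => ?_
      have := besselEnergy_zero_bound t ht
      have : 0 ≤ t * bessel 1 t ^ 2 := by positivity
      push_cast
      linarith
    · refine key _ fun t ht => ?_
      have := besselEnergy_zero_bound t ht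
      have : 0 ≤ t * bessel 0 t ^ 2 := by positivity
      push_cast
      linarith
  | succ n ih =>
    refine ⟨by push_cast; exact ih.2, ?_⟩
    have h : Tendsto (fun t => 2 * ((n : ℝ) + 1) * bessel (n + 1) t / t - bessel n t) atTop
        (𝓝 0) := by
      simpa using ((ih.2.const_mul (2 * ((n : ℝ) + 1))).div_atTop tendsto_id).sub ih.1
    refine h.congr' ?_
    filter_upwards [eventually_gt_atTop 0] with t ht
    have r := bessel_recurrence (n + 1) t
    rw [add_sub_cancel_right] at r
    push_cast at r ⊢
    rw [sub_eq_iff_eq_add, div_eq_iff ht.ne', r]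
    ring

/-- The quantities `t (J_n² + J_{n+1}²)` of all orders are asymptotically equal; as the one for
`n = 0` is bounded, the energies of all orders have a common bound at infinity. -/
theorem besselEnergy_sub_tendsto (n : ℕ) :
    Tendsto (fun t => t * (bessel n t ^ 2 + bessel (n + 1) t ^ 2)
      - t * (bessel 0 t ^ 2 + bessel 1 t ^ 2)) atTop (𝓝 0) := by
  induction n with
  | zero => simp
  | succ n ih =>
    have h0 := (bessel_tendsto_zero n).1
    have h1 := (bessel_tendsto_zero n).2
    have h2 := (bessel_tendsto_zero (n + 1)).2
    push_cast at h2 ⊢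
    have h := ih.add ((h1.const_mul (2 * ((n : ℝ) + 1))).mul (h2.sub h0))
    simp only [mul_zero, sub_zero, add_zero] at h
    refine h.congr fun t => ?_
    have r := bessel_recurrence (n + 1) t
    rw [add_sub_cancel_right] at r
    push_cast at r
    rw [r]
    ring

/-- Decay above the turning point, uniform in the order: `(t - n) J_n(t)² ≤ 5` for `t > n`. For
`n ≥ 1` the energy increases to a limit bounded independently of `n`, and after completing a square
it dominates `(t² - n²) J_n² / t`. -/
theorem bessel_sq_le_of_gt (n : ℕ) (t : ℝ) (h1 : 1 ≤ t) (hn : n < t) :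
    (t - n) * bessel n t ^ 2 ≤ 5 := by
  rcases Nat.eq_zero_or_pos n with rfl | hpos
  · have := besselEnergy_zero_bound t h1
    have : 0 ≤ t * bessel 1 t ^ 2 := by positivity
    push_cast
    linarith
  have hn1 : (1 : ℝ) ≤ n := by exact_mod_cast hpos
  have hmono : MonotoneOn (besselEnergy n) (Set.Ici 1) := by
    refine monotoneOn_of_deriv_nonneg (convex_Ici 1) ?_ ?_ ?_
    · intro s hs
      exact (besselEnergy_hasDerivAt n s
        (by linarith [Set.mem_Ici.1 hs])).continuousAt.continuousWithinAt
    · intro s hs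
      rw [interior_Ici] at hs
      exact (besselEnergy_hasDerivAt n s
        (by linarith [Set.mem_Ioi.1 hs])).differentiableAt.differentiableWithinAt
    · intro s hs
      rw [interior_Ici] at hs
      rw [(besselEnergy_hasDerivAt n s (by linarith [Set.mem_Ioi.1 hs])).deriv]
      have : (0 : ℝ) ≤ n ^ 2 - 1 / 4 := by nlinarith
      positivity
  have hT : Tendsto (fun s => besselEnergy n s - s * (bessel 0 s ^ 2 + bessel 1 s ^ 2)) atTop
      (𝓝 0) := by
    have hA := (bessel_tendsto_zero n).1
    have hB := (bessel_tendsto_zero n).2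
    have h := ((besselEnergy_sub_tendsto n).sub ((hA.mul hB).const_mul (2 * (n : ℝ) + 1))).add
      (((hA.pow 2).const_mul ((n : ℝ) + 1 / 2)).div_atTop tendsto_id)
    simp only [mul_zero, sub_zero, add_zero] at h
    refine h.congr fun s => ?_
    simp only [besselEnergy, id]
    ring
  have hle : besselEnergy n t ≤ 5 := by
    have h5 : Tendsto (fun s => (besselEnergy n s - s * (bessel 0 s ^ 2 + bessel 1 s ^ 2)) + 5)
        atTop (𝓝 5) := by simpa using hT.add_const 5
    refine ge_of_tendsto h5 ?_
    filter_upwards [eventually_ge_atTop t] with s hs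
    have := hmono (Set.mem_Ici.2 h1) (Set.mem_Ici.2 (h1.trans hs)) hs
    have := besselEnergy_zero_bound s (h1.trans hs)
    linarith
  have hid : besselEnergy n t = t * ((n + 1 / 2) * bessel n t / t - bessel (n + 1) t) ^ 2
      + bessel n t ^ 2 * (t ^ 2 - n ^ 2 + 1 / 4) / t := by
    have : t ≠ 0 := by positivity
    rw [besselEnergy]
    field_simp
    ring
  have h2 : bessel n t ^ 2 * (t ^ 2 - n ^ 2 + 1 / 4) / t ≤ 5 := by
    have : 0 ≤ t * ((n + 1 / 2) * bessel n t / t - bessel (n + 1) t) ^ 2 := by positivity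
    linarith
  rw [div_le_iff₀ (by linarith)] at h2
  set A := bessel n t ^ 2
  have hA : 0 ≤ A := sq_nonneg _
  have h3 : ((t - n) * A) * t ≤ 5 * t := by
    nlinarith [mul_nonneg (mul_nonneg hA (by linarith : (0:ℝ) ≤ t - n)) (by linarith : (0:ℝ) ≤ n)]
  exact le_of_mul_le_mul_right h3 (by linarith)

/-- Both sides of the turning point combined: `J_n(t)² ≤ 6 / (1 + |t - n|)`. The true size
`n^{-1/3}` at `t = n` is not needed, since the exponent `3/2` below is integrable. -/
theorem bessel_sq_le (n : ℕ) (t : ℝ) (ht : 0 ≤ t) :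
    (1 + |t - n|) * bessel n t ^ 2 ≤ 6 := by
  have hsq : bessel n t ^ 2 ≤ 1 := by
    rw [← sq_abs]; exact pow_le_one₀ (abs_nonneg _) (bessel_abs_le_one n t)
  have h0 : 0 ≤ bessel n t ^ 2 := sq_nonneg _
  rcases le_or_gt |t - n| 5 with h5 | h5
  · nlinarith
  suffices |t - n| * bessel n t ^ 2 ≤ 5 by linarith
  rcases lt_or_ge (n : ℝ) t with h | h
  · rw [abs_of_pos (by linarith)] at h5 ⊢
    exact bessel_sq_le_of_gt n t (by linarith [(Nat.cast_nonneg n : (0 : ℝ) ≤ n)]) h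
  · rw [abs_of_nonpos (by linarith)] at h5 ⊢
    have h1 := bessel_abs_le_of_lt n t ht (by push_cast; linarith)
    push_cast at h1
    rw [le_div_iff₀ (by linarith)] at h1
    rw [← sq_abs]
    nlinarith [abs_nonneg (bessel n t), bessel_abs_le_one n t]

/-- `∫₀^∞ |J_n|³` is bounded uniformly in the order `n`, by `∫ (6 / (1 + |t - n|))^{3/2} dt`. -/
theorem exists_integral_bessel_cube_le :
    ∃ B : ℝ, 0 < B ∧ ∀ (n : ℤ) (T : ℝ), 0 ≤ T → ∫ t in (0 : ℝ)..T, |bessel n t| ^ 3 ≤ B := by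
  have hg : Integrable (fun t : ℝ => (1 + ‖t‖) ^ (-(3 / 2) : ℝ)) :=
    integrable_one_add_norm (by simp; norm_num)
  set I := ∫ t : ℝ, (1 + ‖t‖) ^ (-(3 / 2) : ℝ) with hI
  have hIn : 0 ≤ I := integral_nonneg fun t => by positivity
  refine ⟨6 ^ (3 / 2 : ℝ) * I + 1, by positivity, fun n T hT => ?_⟩
  have hb : ∀ t, 0 ≤ t → |bessel n t| ^ 3
      ≤ 6 ^ (3 / 2 : ℝ) * (1 + ‖t - n.natAbs‖) ^ (-(3 / 2) : ℝ) := by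
    intro t ht
    have h := bessel_sq_le n.natAbs t ht
    have hp : 0 < 1 + |t - n.natAbs| := by positivity
    rw [bessel_abs_natAbs, Real.rpow_neg (by positivity), Real.norm_eq_abs, ← div_eq_mul_inv,
      ← Real.div_rpow (by norm_num) hp.le]
    rw [mul_comm, ← le_div_iff₀ hp] at h
    rw [← sq_abs] at h
    calc |bessel n.natAbs t| ^ 3 = (|bessel n.natAbs t| ^ 2) ^ (3 / 2 : ℝ) := by
          rw [← Real.rpow_natCast, ← Real.rpow_natCast, ← Real.rpow_mul (abs_nonneg _)]
          norm_num
      _ ≤ _ := Real.rpow_le_rpow (by positivity) h (by norm_num)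
  have hg' : Integrable (fun t : ℝ => 6 ^ (3 / 2 : ℝ) * (1 + ‖t - n.natAbs‖) ^ (-(3 / 2) : ℝ)) :=
    (hg.comp_sub_right (n.natAbs : ℝ)).const_mul _
  calc ∫ t in (0 : ℝ)..T, |bessel n t| ^ 3
      ≤ ∫ t in (0 : ℝ)..T, 6 ^ (3 / 2 : ℝ) * (1 + ‖t - n.natAbs‖) ^ (-(3 / 2) : ℝ) := by
        refine intervalIntegral.integral_mono_on hT
          (((bessel_continuous n).abs.pow 3).intervalIntegrable _ _) hg'.intervalIntegrable
          fun t ht => hb t ht.1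
    _ ≤ ∫ t : ℝ, 6 ^ (3 / 2 : ℝ) * (1 + ‖t - n.natAbs‖) ^ (-(3 / 2) : ℝ) := by
        rw [intervalIntegral.integral_of_le hT]
        exact setIntegral_le_integral hg' (Eventually.of_forall fun t => by positivity)
    _ = 6 ^ (3 / 2 : ℝ) * I := by
        rw [integral_const_mul, integral_sub_right_eq_self
          (fun t : ℝ => (1 + ‖t‖) ^ (-(3 / 2) : ℝ)) (n.natAbs : ℝ)]
    _ ≤ _ := by linarith

/-! ### The discrete Laplacian and its resolvent -/

/-- The Hilbert space `ℓ²(ℤᵈ)`. -/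
noncomputable abbrev L2 (d : ℕ) := lp (fun _ : Fin d → ℤ => ℂ) 2

theorem summable_norm_sq {d : ℕ} (f : L2 d) : Summable fun n => ‖f n‖ ^ 2 := by
  have h := (lp.memℓp f).summable (by norm_num)
  refine h.congr fun n => ?_
  norm_num

theorem norm_sq_eq {d : ℕ} (f : L2 d) : ‖f‖ ^ 2 = ∑' n, ‖f n‖ ^ 2 := by
  have h := lp.norm_rpow_eq_tsum (p := 2) (by norm_num) f
  simpa using h

/-- Translation by `v` on `ℓ²(ℤᵈ)`, `(S_v f)(n) = f(n + v)`. -/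
noncomputable def shift {d : ℕ} (v : Fin d → ℤ) : L2 d →ₗᵢ[ℂ] L2 d where
  toFun f := ⟨fun n => f (n + v), by
    refine memℓp_gen ?_
    have := (summable_norm_sq f).comp_injective (add_left_injective v)
    refine this.congr fun n => ?_
    simp⟩
  map_add' f g := by ext n; rfl
  map_smul' c f := by ext n; rfl
  norm_map' f := by
    refine (sq_eq_sq₀ (norm_nonneg _) (norm_nonneg _)).1 ?_
    rw [norm_sq_eq, norm_sq_eq]
    exact (Equiv.addRight v).tsum_eq fun n => ‖f n‖ ^ 2

@[simp] theorem shift_apply {d : ℕ} (v : Fin d → ℤ) (f : L2 d) (n : Fin d → ℤ) :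
    shift v f n = f (n + v) := rfl

theorem inner_shift {d : ℕ} (v : Fin d → ℤ) (f g : L2 d) :
    inner ℂ (shift v f) g = inner ℂ f (shift (-v) g) := by
  rw [lp.inner_eq_tsum, lp.inner_eq_tsum, ← (Equiv.addRight (-v)).tsum_eq]
  simp

theorem laplacian_eq_sum_shift {d : ℕ} {L : L2 d →L[ℂ] L2 d} (hL : IsDiscreteLaplacian d L)
    (f : L2 d) :
    L f = (1 / 2 : ℂ) • ∑ j : Fin d, (shift (Pi.single j 1) f + shift (-Pi.single j 1) f) := by
  ext n
  rw [hL f n]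
  have h := congrFun (lp.coeFn_sum (E := fun _ : Fin d → ℤ => ℂ) (p := 2)
    (fun j : Fin d => shift (Pi.single j 1) f + shift (-Pi.single j 1) f) univ) n
  rw [lp.coeFn_smul, Pi.smul_apply, smul_eq_mul, h, Finset.sum_apply]
  simp [sub_eq_add_neg]

theorem laplacian_isSelfAdjoint {d : ℕ} {L : L2 d →L[ℂ] L2 d} (hL : IsDiscreteLaplacian d L) :
    IsSelfAdjoint L := by
  rw [ContinuousLinearMap.isSelfAdjoint_iff_isSymmetric]
  intro f g
  change inner ℂ (L f) g = inner ℂ f (L g)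
  rw [laplacian_eq_sum_shift hL, laplacian_eq_sum_shift hL, inner_smul_left, inner_smul_right,
    sum_inner, inner_sum]
  congr 1
  · rw [map_div₀, map_one, Complex.conj_ofNat]
  refine sum_congr rfl fun j _ => ?_
  rw [inner_add_left, inner_add_right, inner_shift, inner_shift, neg_neg, add_comm]

theorem laplacian_norm_le {d : ℕ} {L : L2 d →L[ℂ] L2 d} (hL : IsDiscreteLaplacian d L) :
    ‖L‖ ≤ d := by
  refine L.opNorm_le_bound (Nat.cast_nonneg d) fun f => ?_
  rw [laplacian_eq_sum_shift hL, norm_smul]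
  have h : ‖∑ j : Fin d, (shift (Pi.single j 1) f + shift (-Pi.single j 1) f)‖
      ≤ ∑ j : Fin d, 2 * ‖f‖ := by
    refine norm_sum_le_of_le _ fun j _ => (norm_add_le _ _).trans ?_
    rw [LinearIsometry.norm_map, LinearIsometry.norm_map, two_mul]
  rw [sum_const, card_univ, Fintype.card_fin, nsmul_eq_mul] at h
  have : ‖(1 / 2 : ℂ)‖ = 1 / 2 := by norm_num
  rw [this]
  linarith

/-- The spectrum of the Laplacian is contained in `[-d, d]`. -/
theorem isUnit_sub_of_not_mem_segment {d : ℕ} {L : L2 d →L[ℂ] L2 d} (hL : IsDiscreteLaplacian d L)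
    (l : ℂ) (hl : ¬ (l.im = 0 ∧ |l.re| ≤ d)) : IsUnit (L - l • (1 : L2 d →L[ℂ] L2 d)) := by
  by_contra hu
  apply hl
  have hmem : l ∈ spectrum ℂ L := by
    rw [spectrum.mem_iff, Algebra.algebraMap_eq_smul_one]
    intro h
    apply hu
    have := h.neg
    rwa [neg_sub] at this
  have h1 := (laplacian_isSelfAdjoint hL).mem_spectrum_eq_re hmem
  have h2 : ‖l‖ ≤ d := by
    have h3 := spectrum.norm_le_norm_mul_of_mem hmem
    have h4 : ‖(1 : L2 d →L[ℂ] L2 d)‖ ≤ 1 := ContinuousLinearMap.norm_id_le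
    have h5 := laplacian_norm_le hL
    nlinarith [norm_nonneg L]
  exact ⟨by rw [h1]; simp, (Complex.abs_re_le_norm l).trans h2⟩

/-- The map `z ↦ (d/2)(z + 1/z)` sends the punctured open unit disc into `ℂ ∖ [-d, d]`. -/
theorem joukowsky_not_mem_segment {d : ℕ} (hd : 0 < d) (z : ℂ) (hz0 : z ≠ 0) (hz : ‖z‖ < 1) :
    ¬ (((d : ℂ) / 2 * (z + z⁻¹)).im = 0 ∧ |((d : ℂ) / 2 * (z + z⁻¹)).re| ≤ d) := by
  rintro ⟨him, hre⟩
  have hdp : (0 : ℝ) < d := by exact_mod_cast hd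
  have e : (d : ℂ) / 2 = ((d / 2 : ℝ) : ℂ) := by push_cast; rfl
  rw [e, Complex.im_ofReal_mul, mul_eq_zero, or_iff_right (by positivity)] at him
  rw [e, Complex.re_ofReal_mul, abs_mul, abs_of_pos (by positivity : (0 : ℝ) < d / 2)] at hre
  set w := z + z⁻¹ with hw
  have hw2 : |w.re| ≤ 2 := by
    by_contra! h
    nlinarith
  -- If `w = z + 1/z` is real in `[-2, 2]`, the roots of `z² - wz + 1` have modulus one.
  have hq : z * w = z ^ 2 + 1 := by
    rw [hw]; field_simp
  have h1 := congrArg Complex.re hq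
  have h2 := congrArg Complex.im hq
  simp only [Complex.mul_re, Complex.mul_im, Complex.add_re, Complex.add_im, sq, him,
    Complex.one_re, Complex.one_im] at h1 h2
  have hn : z.re ^ 2 + z.im ^ 2 < 1 := by
    have := Complex.sq_norm z
    rw [Complex.normSq_apply] at this
    nlinarith [norm_nonneg z]
  rw [abs_le] at hw2
  by_cases hy : z.im = 0
  · rw [hy] at h1 hn
    nlinarith [sq_nonneg (z.re - w.re / 2), sq_nonneg (z.re * w.re / 2 - 1)]
  · have : w.re = 2 * z.re := by
      have : z.im * (w.re - 2 * z.re) = 0 := by linarith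
      rcases mul_eq_zero.1 this with h | h
      · exact absurd h hy
      · linarith
    rw [this] at h1
    nlinarith

/-- The pencil `zL - (d/2)(z² + 1)`, which is `z (L - λ)` for `λ = (d/2)(z + 1/z)`. Multiplying
by `z` removes the singularity at `z = 0`, so the pencil is polynomial in `z` and invertible on the
whole open unit disc. -/
noncomputable def pencil {d : ℕ} (L : L2 d →L[ℂ] L2 d) (z : ℂ) : L2 d →L[ℂ] L2 d :=
  z • L - ((d : ℂ) / 2 * (z ^ 2 + 1)) • 1

theorem pencil_eq {d : ℕ} (L : L2 d →L[ℂ] L2 d) (z : ℂ) (hz : z ≠ 0) :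
    pencil L z = z • (L - ((d : ℂ) / 2 * (z + z⁻¹)) • (1 : L2 d →L[ℂ] L2 d)) := by
  rw [pencil, smul_sub, smul_smul]
  congr 2
  field_simp

theorem isUnit_pencil {d : ℕ} (hd : 0 < d) {L : L2 d →L[ℂ] L2 d} (hL : IsDiscreteLaplacian d L)
    (z : ℂ) (hz : ‖z‖ < 1) : IsUnit (pencil L z) := by
  by_cases h0 : z = 0
  · have : (-((d : ℂ) / 2)) ≠ 0 := by simp; omega
    rw [h0, pencil, zero_smul, zero_sub, ← neg_smul]
    simpa [Algebra.algebraMap_eq_smul_one] using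
      (IsUnit.mk0 _ this).map (algebraMap ℂ (L2 d →L[ℂ] L2 d))
  · rw [pencil_eq L z h0]
    have h := isUnit_sub_of_not_mem_segment hL _ (joukowsky_not_mem_segment hd z h0 hz)
    exact (IsUnit.smul (Units.mk0 z h0) h :)

/-- The Green kernel `⟨δ_n, (L - λ)⁻¹ δ_m⟩` at `λ = (d/2)(z + 1/z)`, as a function of `z`. It is
analytic on the unit disc and vanishes at `z = 0`, which corresponds to `λ = ∞`. -/
noncomputable def green {d : ℕ} (L : L2 d →L[ℂ] L2 d) (z : ℂ) (n m : Fin d → ℤ) : ℂ :=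
  z * Ring.inverse (pencil L z) (lp.single 2 m 1) n

theorem green_differentiableOn {d : ℕ} (hd : 0 < d) {L : L2 d →L[ℂ] L2 d}
    (hL : IsDiscreteLaplacian d L) (n m : Fin d → ℤ) :
    DifferentiableOn ℂ (fun z => green L z n m) (Metric.ball 0 1) := by
  intro z hz
  refine DifferentiableAt.differentiableWithinAt ?_
  have hp : DifferentiableAt ℂ (pencil L) z := by
    unfold pencil
    fun_prop
  have hi : DifferentiableAt ℂ (fun z => Ring.inverse (pencil L z)) z :=
    DifferentiableAt.comp (g := Ring.inverse) z
      (differentiableAt_inverse (𝕜 := ℂ) (isUnit_pencil hd hL z (by simpa using hz))) hp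
  have ha : DifferentiableAt ℂ (fun z => Ring.inverse (pencil L z) (lp.single 2 m 1)) z :=
    hi.clm_apply (differentiableAt_const _)
  have he := (lp.evalCLM ℂ (fun _ : Fin d → ℤ => ℂ) 2 n).differentiableAt.comp z ha
  exact differentiableAt_id.mul he

/-! ### The propagator as a product of Bessel functions -/

/-- `∏ⱼ c^{kⱼ} J_{kⱼ}(t)`; for `c = ±i` this is the convolution kernel of `exp (t c L)`. -/
noncomputable def besselProd {d : ℕ} (c : ℂ) (k : Fin d → ℤ) (t : ℝ) : ℂ :=
  ∏ j, (c ^ k j * bessel (k j) t)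

theorem besselFactor_hasDerivAt (c : ℂ) (hc : c ^ 2 = -1) (k : ℤ) (t : ℝ) :
    HasDerivAt (fun t : ℝ => c ^ k * (bessel k t : ℂ))
      (c * (1 / 2) * (c ^ (k + 1) * bessel (k + 1) t + c ^ (k - 1) * bessel (k - 1) t)) t := by
  have hc0 : c ≠ 0 := by rintro rfl; norm_num at hc
  refine ((bessel_hasDerivAt k t).ofReal_comp.const_mul (c ^ k)).congr_deriv ?_
  have e : c⁻¹ = -c := by
    refine inv_eq_of_mul_eq_one_right ?_
    linear_combination -hc
  rw [zpow_add_one₀ hc0, zpow_sub_one₀ hc0, e]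
  push_cast
  linear_combination (-(c ^ k) * (bessel (k + 1) t - bessel (k - 1) t) / 2) * hc

/-- Because `c⁻¹ = -c`, the relation `J_k' = (J_{k-1} - J_{k+1}) / 2` becomes the lattice equation
`y' = c L y`. -/
theorem besselProd_hasDerivAt {d : ℕ} (c : ℂ) (hc : c ^ 2 = -1) (k : Fin d → ℤ) (t : ℝ) :
    HasDerivAt (besselProd c k)
      (c * ((1 / 2) * ∑ j, (besselProd c (k + Pi.single j 1) t
        + besselProd c (k - Pi.single j 1) t))) t := by
  have h := HasDerivAt.fun_finsetProd (u := univ) (x := t)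
    (f := fun j (t : ℝ) => c ^ k j * (bessel (k j) t : ℂ))
    (fun j _ => besselFactor_hasDerivAt c hc (k j) t)
  refine h.congr_deriv ?_
  rw [← mul_assoc, mul_sum]
  refine sum_congr rfl fun j _ => ?_
  have hp : ∀ k' : Fin d → ℤ, (∀ i, i ≠ j → k' i = k i) → besselProd c k' t =
      (∏ i ∈ univ.erase j, (c ^ k i * (bessel (k i) t : ℂ))) * (c ^ k' j * bessel (k' j) t) := by
    intro k' hk'
    rw [besselProd, ← prod_erase_mul univ _ (mem_univ j)]
    congr 1
    refine prod_congr rfl fun i hi => ?_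
    rw [hk' i (ne_of_mem_erase hi)]
  rw [hp _ fun i hi => by simp [hi], hp _ fun i hi => by simp [hi]]
  simp only [Pi.add_apply, Pi.sub_apply, Pi.single_eq_same, smul_eq_mul]
  ring

theorem norm_besselProd {d : ℕ} (c : ℂ) (hc : ‖c‖ = 1) (k : Fin d → ℤ) (t : ℝ) :
    ‖besselProd c k t‖ = ∏ j, |bessel (k j) t| := by
  rw [besselProd, norm_prod]
  refine prod_congr rfl fun j _ => ?_
  rw [norm_mul, norm_zpow, hc, one_zpow, one_mul, Complex.norm_real, Real.norm_eq_abs]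

theorem besselProd_zero {d : ℕ} (c : ℂ) (k : Fin d → ℤ) :
    besselProd c k 0 = if k = 0 then 1 else 0 := by
  split_ifs with h
  · simp [besselProd, h, bessel_zero]
  · obtain ⟨j, hj⟩ := Function.ne_iff.1 h
    refine prod_eq_zero (mem_univ j) ?_
    rw [bessel_zero, if_neg (by simpa using hj)]
    simp

/-- A bounded solution of the lattice equation `y' = c L y`, posed coordinatewise, vanishes if it
vanishes at time `0`: iterating the Gronwall step gives `|y_n(t)| ≤ M (dt)ᵏ / k!` for every `k`. -/
theorem lattice_ode_unique {d : ℕ} (c : ℂ) (hc : ‖c‖ = 1) (M : ℝ)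
    (y : (Fin d → ℤ) → ℝ → ℂ)
    (hM : ∀ n t, 0 ≤ t → ‖y n t‖ ≤ M) (h0 : ∀ n, y n 0 = 0)
    (hy : ∀ n t, HasDerivAt (y n)
      (c * ((1 / 2) * ∑ j, (y (n + Pi.single j 1) t + y (n - Pi.single j 1) t))) t)
    (n : Fin d → ℤ) (t : ℝ) (ht : 0 ≤ t) : y n t = 0 := by
  have key : ∀ (k : ℕ) (n : Fin d → ℤ) (t : ℝ), 0 ≤ t →
      ‖y n t‖ ≤ M * ((d * t) ^ k / k.factorial) := by
    intro k
    induction k with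
    | zero => intro n t ht; simpa using hM n t ht
    | succ k ih =>
      intro n t ht
      refine image_norm_le_of_norm_deriv_right_le_deriv_boundary (a := 0) (b := t)
        (f := y n) (B := fun s => M * ((d * s) ^ (k + 1) / (k + 1).factorial))
        (B' := fun s => d * (M * ((d * s) ^ k / k.factorial)))
        (fun s _ => (hy n s).continuousAt.continuousWithinAt)
        (fun s _ => (hy n s).hasDerivWithinAt) (by simp [h0]) ?_ ?_ ⟨ht, le_rfl⟩
      · intro s
        have h := (((hasDerivAt_id s).const_mul (d : ℝ)).pow (k + 1)).div_const
          ((k + 1).factorial : ℝ) |>.const_mul M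
        refine h.congr_deriv ?_
        have : (k.factorial : ℝ) ≠ 0 := by positivity
        rw [Nat.factorial_succ]
        push_cast
        field_simp
        simp
      · intro s hs
        rw [norm_mul, hc, one_mul, norm_mul]
        have h1 : ‖∑ j : Fin d, (y (n + Pi.single j 1) s + y (n - Pi.single j 1) s)‖
            ≤ ∑ j : Fin d, 2 * (M * ((d * s) ^ k / k.factorial)) := by
          refine norm_sum_le_of_le _ fun j _ => (norm_add_le _ _).trans ?_
          rw [two_mul]
          exact add_le_add (ih _ s hs.1) (ih _ s hs.1)
        rw [sum_const, card_univ, Fintype.card_fin, nsmul_eq_mul] at h1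
        have : ‖(1 / 2 : ℂ)‖ = 1 / 2 := by norm_num
        rw [this]
        linarith
  have hlim : Tendsto (fun k : ℕ => M * ((d * t) ^ k / k.factorial)) atTop (𝓝 (M * 0)) :=
    (FloorSemiring.tendsto_pow_div_factorial_atTop (d * t)).const_mul M
  rw [mul_zero] at hlim
  exact norm_le_zero_iff.1 (ge_of_tendsto' hlim fun k => key k n t ht)

/-- `exp (t c L)`, used for `c = ±i`; then it is unitary. -/
noncomputable def propagator {d : ℕ} (L : L2 d →L[ℂ] L2 d) (c : ℂ) (t : ℝ) : L2 d →L[ℂ] L2 d :=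
  NormedSpace.exp ((t : ℂ) • (c • L))

theorem propagator_hasDerivAt {d : ℕ} (L : L2 d →L[ℂ] L2 d) (c : ℂ) (t : ℝ) (f : L2 d)
    (n : Fin d → ℤ) :
    HasDerivAt (fun t => propagator L c t f n) (c * propagator L c t (L f) n) t := by
  have h : HasDerivAt (fun s : ℝ => propagator L c s) (propagator L c t * (c • L)) t := by
    have h1 := (hasDerivAt_exp_smul_const (𝕂 := ℂ) (c • L) (t : ℂ)).scomp (𝕜 := ℝ) t
      Complex.ofRealCLM.hasDerivAt
    exact h1.congr_deriv (one_smul _ _)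
  have h2 := (((lp.evalCLM ℂ (fun _ : Fin d → ℤ => ℂ) 2 n).comp
    (ContinuousLinearMap.apply ℂ (L2 d) f)).restrictScalars ℝ).hasFDerivAt.comp_hasDerivAt t h
  refine h2.congr_deriv ?_
  change (propagator L c t) (c • L f) n = _
  rw [map_smul]
  rfl

theorem propagator_comm {d : ℕ} (L : L2 d →L[ℂ] L2 d) (c : ℂ) (t : ℝ) (f : L2 d) :
    propagator L c t (L f) = L (propagator L c t f) := by
  have h : Commute (propagator L c t) L :=
    ((Commute.refl L).smul_left c |>.smul_left (t : ℂ)).exp_left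
  exact DFunLike.congr_fun h.eq f

theorem norm_propagator_apply_le {d : ℕ} {L : L2 d →L[ℂ] L2 d} (hL : IsDiscreteLaplacian d L)
    (c : ℂ) (hc : starRingEnd ℂ c = -c) (t : ℝ) (f : L2 d) :
    ‖propagator L c t f‖ ≤ ‖f‖ := by
  have hs : (t : ℂ) • (c • L) ∈ skewAdjoint (L2 d →L[ℂ] L2 d) := by
    rw [skewAdjoint.mem_iff, star_smul, star_smul, (laplacian_isSelfAdjoint hL).star_eq]
    simp [hc]
  -- The general fact about exponentials of skew-adjoint elements needs an algebra structure
  -- over `ℚ`.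
  let +nondep : NormedAlgebra ℚ (L2 d →L[ℂ] L2 d) := .restrictScalars ℚ ℂ _
  have hu := NormedSpace.exp_mem_unitary_of_mem_skewAdjoint hs
  have h1 : ‖propagator L c t‖ ≤ 1 := by
    have h2 := CStarRing.norm_mem_unitary_mul (1 : L2 d →L[ℂ] L2 d) hu
    rw [mul_one] at h2
    exact h2.le.trans ContinuousLinearMap.norm_id_le
  exact (ContinuousLinearMap.le_opNorm _ _).trans (mul_le_of_le_one_left (norm_nonneg _) h1)

/-- The kernel of `exp (t c L)` is a product of Bessel functions: both sides are bounded solutions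
of the same lattice equation with initial value `δ_m`. -/
theorem propagator_single {d : ℕ} {L : L2 d →L[ℂ] L2 d} (hL : IsDiscreteLaplacian d L)
    (c : ℂ) (hc : starRingEnd ℂ c = -c) (hc2 : c ^ 2 = -1) (hc1 : ‖c‖ = 1)
    (m n : Fin d → ℤ) (t : ℝ) (ht : 0 ≤ t) :
    propagator L c t (lp.single 2 m 1) n = besselProd c (n - m) t := by
  have h := lattice_ode_unique c hc1 2
    (fun n t => propagator L c t (lp.single 2 m 1) n - besselProd c (n - m) t) ?_ ?_ ?_ n t ht
  · exact sub_eq_zero.1 h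
  · intro n t _
    refine (norm_sub_le _ _).trans ?_
    have h1 : ‖propagator L c t (lp.single 2 m 1) n‖ ≤ 1 := by
      refine (lp.norm_apply_le_norm (by norm_num) _ n).trans
        ((norm_propagator_apply_le hL c hc t _).trans ?_)
      rw [lp.norm_single (by norm_num)]
      simp
    have h2 : ‖besselProd c (n - m) t‖ ≤ 1 := by
      rw [norm_besselProd c hc1]
      exact prod_le_one (fun _ _ => abs_nonneg _) fun j _ => bessel_abs_le_one _ _
    linarith
  · intro n
    simp only [besselProd_zero, propagator, Complex.ofReal_zero, zero_smul, NormedSpace.exp_zero,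
      sub_eq_zero, one_apply_eq_self]
    rw [lp.single_apply]
    simp [Pi.single_apply]
  · intro n t
    have h1 := propagator_hasDerivAt L c t (lp.single 2 m 1) n
    have h2 := (besselProd_hasDerivAt c hc2 (n - m) t)
    refine (h1.sub h2).congr_deriv ?_
    rw [propagator_comm, hL, ← mul_sub, ← mul_sub, ← sum_sub_distrib]
    congr 2
    refine sum_congr rfl fun j _ => ?_
    have e1 : n + Pi.single j 1 - m = n - m + Pi.single j 1 := by abel
    have e2 : n - Pi.single j 1 - m = n - m - Pi.single j 1 := by abel
    rw [e1, e2]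
    ring

/-! ### The uniform bound on the Green kernel -/

/-- Here `d ≥ 3` enters: a product of `d` factors in `[0, 1]` is at most the product of three of
them, hence at most the sum of the cubes. -/
theorem prod_le_sum_cube {d : ℕ} (hd : 3 ≤ d) (f : Fin d → ℝ) (h0 : ∀ j, 0 ≤ f j)
    (h1 : ∀ j, f j ≤ 1) : ∏ j, f j ≤ ∑ j, f j ^ 3 := by
  obtain ⟨k, rfl⟩ := Nat.exists_eq_add_of_le' hd
  simp only [Fin.prod_univ_succ, Fin.sum_univ_succ]
  set a := f 0
  set b := f (Fin.succ 0)
  set c := f (Fin.succ (Fin.succ 0))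
  have hp : ∏ i : Fin k, f i.succ.succ.succ ≤ 1 := prod_le_one (fun _ _ => h0 _) fun _ _ => h1 _
  have hs : 0 ≤ ∑ i : Fin k, f i.succ.succ.succ ^ 3 := sum_nonneg fun _ _ => pow_nonneg (h0 _) 3
  have ha : 0 ≤ a := h0 _
  have hb : 0 ≤ b := h0 _
  have hc : 0 ≤ c := h0 _
  have h2 : a * (b * (c * ∏ i : Fin k, f i.succ.succ.succ)) ≤ a * (b * c) := by
    gcongr
    exact mul_le_of_le_one_right hc hp
  have h3 : a * (b * c) ≤ a ^ 3 + b ^ 3 + c ^ 3 := by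
    nlinarith [mul_nonneg (add_nonneg (add_nonneg ha hb) hc)
      (add_nonneg (add_nonneg (sq_nonneg (a - b)) (sq_nonneg (b - c))) (sq_nonneg (a - c))),
      mul_nonneg ha (mul_nonneg hb hc), pow_nonneg ha 3]
  linarith

theorem norm_besselProd_le {d : ℕ} (hd : 3 ≤ d) (c : ℂ) (hc : ‖c‖ = 1) (k : Fin d → ℤ) (t : ℝ) :
    ‖besselProd c k t‖ ≤ ∑ j, |bessel (k j) t| ^ 3 := by
  rw [norm_besselProd c hc]
  exact prod_le_sum_cube hd _ (fun _ => abs_nonneg _) fun _ => bessel_abs_le_one _ _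

/-- The solution `g` of `(L - l) g = δ_m` is bounded pointwise by `d B`, uniformly in `l`. For
`c = ±i` with `Re (c l) > 0`, the function `e^{-clt} exp (t c L) g` tends to `0` and has derivative
`c e^{-clt} exp (t c L) δ_m`, whose coordinates are bounded by `∑ⱼ |J_{nⱼ - mⱼ}(t)|³`; integrating over
`[0, ∞)` gives the claim. -/
theorem norm_resolvent_apply_le {d : ℕ} (hd : 3 ≤ d) {L : L2 d →L[ℂ] L2 d}
    (hL : IsDiscreteLaplacian d L) {B : ℝ}
    (hB : ∀ (n : ℤ) (T : ℝ), 0 ≤ T → ∫ t in (0 : ℝ)..T, |bessel n t| ^ 3 ≤ B)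
    (c l : ℂ) (hc : starRingEnd ℂ c = -c) (hc2 : c ^ 2 = -1) (hc1 : ‖c‖ = 1)
    (hcl : 0 < (c * l).re) (g : L2 d) (m n : Fin d → ℤ)
    (hg : L g - l • g = lp.single 2 m 1) : ‖g n‖ ≤ d * B := by
  have hy : ∀ t : ℝ, 0 ≤ t → HasDerivAt (fun t : ℝ => Complex.exp (-(c * l) * t) * propagator L c t g n)
      (c * (Complex.exp (-(c * l) * t) * besselProd c (n - m) t)) t := by
    intro t ht
    have h1 : HasDerivAt (fun t : ℝ => Complex.exp (-(c * l) * t))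
        (Complex.exp (-(c * l) * t) * -(c * l)) t := by
      have := ((hasDerivAt_id (t : ℂ)).const_mul (-(c * l))).cexp.comp_ofReal
      simpa using this
    refine (h1.mul (propagator_hasDerivAt L c t g n)).congr_deriv ?_
    rw [← propagator_single hL c hc hc2 hc1 m n t ht, ← hg, map_sub, map_smul, lp.coeFn_sub,
      Pi.sub_apply, lp.coeFn_smul, Pi.smul_apply, smul_eq_mul]
    ring
  have hexp : ∀ t : ℝ, ‖Complex.exp (-(c * l) * t)‖ = Real.exp (-((c * l).re * t)) := by
    intro t
    rw [Complex.norm_exp, Complex.re_mul_ofReal, Complex.neg_re, neg_mul]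
  have hcontB : Continuous (besselProd c (n - m)) :=
    continuous_iff_continuousAt.2 fun t => (besselProd_hasDerivAt c hc2 _ t).continuousAt
  have hbound : ∀ T : ℝ, 0 ≤ T → ‖g n‖ ≤ Real.exp (-((c * l).re * T)) * ‖g‖ + d * B := by
    intro T hT
    have hi := intervalIntegral.integral_eq_sub_of_hasDerivAt (a := 0) (b := T)
      (f := fun t : ℝ => Complex.exp (-(c * l) * t) * propagator L c t g n)
      (f' := fun t : ℝ => c * (Complex.exp (-(c * l) * t) * besselProd c (n - m) t))
      (fun t ht => hy t (by rw [Set.uIcc_of_le hT] at ht; exact ht.1))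
      ((by fun_prop : Continuous _).intervalIntegrable _ _)
    have hU0 : propagator L c 0 g n = g n := by
      simp [propagator, NormedSpace.exp_zero]
    simp only [Complex.ofReal_zero, mul_zero, Complex.exp_zero, one_mul, hU0] at hi
    have h1 : ‖∫ t in (0 : ℝ)..T, c * (Complex.exp (-(c * l) * t) * besselProd c (n - m) t)‖
        ≤ ∫ t in (0 : ℝ)..T, ∑ j, |bessel ((n - m) j) t| ^ 3 := by
      refine intervalIntegral.norm_integral_le_of_norm_le (μ := volume) hT ?_ ?_
      · refine Eventually.of_forall fun t ht => ?_
        rw [norm_mul, hc1, one_mul, norm_mul, hexp]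
        refine (mul_le_of_le_one_left (norm_nonneg _) ?_).trans (norm_besselProd_le hd c hc1 _ t)
        rw [Real.exp_le_one_iff]
        have := mul_pos hcl ht.1
        linarith
      · exact (continuous_finsetSum _ fun j _ =>
          (bessel_continuous _).abs.pow 3).intervalIntegrable _ _
    have h2 : ∫ t in (0 : ℝ)..T, ∑ j, |bessel ((n - m) j) t| ^ 3 ≤ d * B := by
      rw [intervalIntegral.integral_finsetSum (f := fun j t => |bessel ((n - m) j) t| ^ 3)
        fun j _ => ((bessel_continuous _).abs.pow 3).intervalIntegrable _ _]
      refine (sum_le_sum fun j _ => hB _ T hT).trans ?_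
      simp
    have h3 : ‖Complex.exp (-(c * l) * T) * propagator L c T g n‖
        ≤ Real.exp (-((c * l).re * T)) * ‖g‖ := by
      rw [norm_mul, hexp]
      gcongr
      exact (lp.norm_apply_le_norm (by norm_num) _ n).trans (norm_propagator_apply_le hL c hc T g)
    have h4 : g n = Complex.exp (-(c * l) * T) * propagator L c T g n
        - ∫ t in (0 : ℝ)..T, c * (Complex.exp (-(c * l) * t) * besselProd c (n - m) t) := by
      rw [hi]; ring
    rw [h4]
    exact (norm_sub_le _ _).trans (add_le_add h3 (h1.trans h2))
  have hlim : Tendsto (fun T : ℝ => Real.exp (-((c * l).re * T)) * ‖g‖ + d * B) atTop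
      (𝓝 (0 * ‖g‖ + d * B)) := by
    refine Tendsto.add_const _ (Tendsto.mul_const _ ?_)
    exact Real.tendsto_exp_neg_atTop_nhds_zero.comp (tendsto_id.const_mul_atTop hcl)
  rw [zero_mul, zero_add] at hlim
  refine ge_of_tendsto hlim ?_
  filter_upwards [eventually_ge_atTop 0] with T hT
  exact hbound T hT

/-- For `z` off the real axis `λ = (d/2)(z + 1/z)` is not real, so one of `c = i` and `c = -i`
satisfies `Re (c λ) > 0`. -/
theorem norm_green_le_of_im_ne_zero {d : ℕ} (hd : 3 ≤ d) {L : L2 d →L[ℂ] L2 d}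
    (hL : IsDiscreteLaplacian d L) {B : ℝ}
    (hB : ∀ (n : ℤ) (T : ℝ), 0 ≤ T → ∫ t in (0 : ℝ)..T, |bessel n t| ^ 3 ≤ B)
    (z : ℂ) (hz : ‖z‖ < 1) (him : z.im ≠ 0) (n m : Fin d → ℤ) : ‖green L z n m‖ ≤ d * B := by
  have hz0 : z ≠ 0 := by rintro rfl; simp at him
  set l : ℂ := (d : ℂ) / 2 * (z + z⁻¹) with hl
  set g : L2 d := z • Ring.inverse (pencil L z) (lp.single 2 m 1) with hgdef
  have hg : L g - l • g = lp.single 2 m 1 := by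
    have h1 := Ring.mul_inverse_cancel _ (isUnit_pencil (by omega) hL z hz)
    have h2 := DFunLike.congr_fun h1 (lp.single 2 m 1)
    rw [pencil_eq L z hz0] at h2
    rw [hgdef, map_smul, smul_comm l z, ← smul_sub, pencil_eq L z hz0]
    exact h2
  have hgn : green L z n m = g n := rfl
  have hlim : l.im ≠ 0 := by
    have e : (d : ℂ) / 2 = ((d / 2 : ℝ) : ℂ) := by push_cast; rfl
    rw [hl, e, Complex.im_ofReal_mul, Complex.add_im, Complex.inv_im]
    have hn : Complex.normSq z < 1 := by
      rw [Complex.normSq_eq_norm_sq]; nlinarith [norm_nonneg z]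
    have hp : 0 < Complex.normSq z := Complex.normSq_pos.2 hz0
    have h3 : z.im + -z.im / Complex.normSq z = z.im * ((Complex.normSq z - 1) / Complex.normSq z) := by
      field_simp
      ring
    rw [h3]
    have hd0 : (d : ℝ) ≠ 0 := by norm_cast; omega
    have : Complex.normSq z - 1 ≠ 0 := by linarith
    positivity
  rw [hgn]
  rcases lt_or_gt_of_ne hlim with h | h
  · exact norm_resolvent_apply_le hd hL hB Complex.I l (by simp) (by simp) (by simp)
      (by simpa using h) g m n hg
  · exact norm_resolvent_apply_le hd hL hB (-Complex.I) l (by simp) (by simp) (by simp)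
      (by simpa using h) g m n hg

/-- In dimension `d ≥ 3` the Green kernel is bounded uniformly in `z`, `n` and `m`. Real `z` are
reached by continuity. -/
theorem exists_green_bound (d : ℕ) (hd : 3 ≤ d) :
    ∃ B : ℝ, 0 < B ∧ ∀ L : L2 d →L[ℂ] L2 d, IsDiscreteLaplacian d L →
      ∀ z : ℂ, ‖z‖ < 1 → ∀ n m, ‖green L z n m‖ ≤ B := by
  obtain ⟨B, hB0, hB⟩ := exists_integral_bessel_cube_le
  have hd0 : (0 : ℝ) < d := by norm_cast; omega
  refine ⟨d * B, by positivity, fun L hL z hz n m => ?_⟩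
  by_cases him : z.im = 0
  · have hc : ContinuousAt (fun w => green L w n m) z :=
      ((green_differentiableOn (by omega) hL n m).differentiableAt
        (Metric.isOpen_ball.mem_nhds (by simpa using hz))).continuousAt
    have hp : Tendsto (fun e : ℝ => z + e * Complex.I) (𝓝[>] 0) (𝓝 z) := by
      have : Continuous fun e : ℝ => z + e * Complex.I := by fun_prop
      have h := this.tendsto 0
      simp only [Complex.ofReal_zero, zero_mul, add_zero] at h
      exact h.mono_left nhdsWithin_le_nhds
    refine le_of_tendsto (hc.tendsto.comp hp).norm ?_
    filter_upwards [self_mem_nhdsWithin,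
      hp.eventually (Metric.isOpen_ball.mem_nhds (by simpa using hz : z ∈ Metric.ball (0 : ℂ) 1))]
      with e he hb
    refine norm_green_le_of_im_ne_zero hd hL hB _ (by simpa using hb) ?_ n m
    have : (0 : ℝ) < e := he
    simp [him, this.ne']
  · exact norm_green_le_of_im_ne_zero hd hL hB z hz him n m

/-! ### The perturbation determinant and the eigenvalue sum -/

/-- Replacing column `i₀` of `1 + K` by a column of size at most `ε` gives a determinant of size
`O(ε)`, with a constant independent of the size of `K`. -/
theorem norm_det_updateCol_le {ι : Type*} [Fintype ι] [DecidableEq ι] (K : Matrix ι ι ℂ)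
    (c : ι → ℝ) (hc : ∀ j, 0 ≤ c j) (h : ∀ i j, ‖K i j‖ ≤ c j ^ 3) (σ : ℝ)
    (hσ : ∑ j, c j ^ 2 ≤ σ) (i₀ : ι) (r : ι → ℂ) (ε : ℝ) (hε : 0 ≤ ε) (hr : ∀ i, ‖r i‖ ≤ ε) :
    ‖((1 + K).updateCol i₀ r).det‖
      ≤ ε * (2 * Real.exp (√(Real.exp 1 * (σ + 1)) * (σ + 1))) := by
  set E := Real.exp (√(Real.exp 1 * (σ + 1)) * (σ + 1))
  -- The new column is `w = (e + w) - e` with `e` the basis vector at `i₀`, and the matrices with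
  -- column `e + w` or `e` have the form `1 + N` with column `i₀` of `N` bounded by `1`, so that the
  -- weights `c`, updated to `1` at `i₀`, have square sum at most `σ + 1`.
  have hcol : ∀ w : ι → ℂ, (1 + K.updateCol i₀ w) = (1 + K).updateCol i₀ (Pi.single i₀ 1 + w) := by
    intro w
    ext i j
    by_cases hj : j = i₀
    · subst hj
      simp [Matrix.one_apply, Pi.single_apply]
    · simp [hj]
  have hN : ∀ w : ι → ℂ, (∀ i, ‖w i‖ ≤ 1) → ‖(1 + K.updateCol i₀ w).det‖ ≤ E := by
    intro w hw
    refine norm_det_one_add_le _ (Function.update c i₀ 1) ?_ ?_ _ ?_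
    · intro j
      by_cases hj : j = i₀
      · subst hj; simp
      · simp [hj, hc]
    · intro i j
      by_cases hj : j = i₀
      · subst hj; simpa using hw i
      · simpa [hj] using h i j
    · have h1 : ∀ j, Function.update c i₀ 1 j ^ 2 ≤ c j ^ 2 + if j = i₀ then 1 else 0 := by
        intro j
        by_cases hj : j = i₀
        · subst hj; simp [sq_nonneg]
        · simp [hj]
      refine (sum_le_sum fun j _ => h1 j).trans ?_
      rw [sum_add_distrib]
      simpa using hσ
  have hsub : ∀ w : ι → ℂ, ((1 + K).updateCol i₀ w).det
      = (1 + K.updateCol i₀ w).det - (1 + K.updateCol i₀ 0).det := by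
    intro w
    rw [hcol, hcol, add_zero, Matrix.det_updateCol_add]
    ring
  rcases hε.eq_or_lt with h0 | hpos
  · have : r = 0 := by
      ext i
      have := hr i
      rw [← h0] at this
      simpa using this
    rw [this, hsub, sub_self, ← h0]
    simp
  -- Normalise the column to size `1` before splitting, so that the factor `ε` survives.
  · have e : r = (ε : ℂ) • ((ε : ℂ)⁻¹ • r) := by
      rw [smul_smul, mul_inv_cancel₀ (by exact_mod_cast hpos.ne'), one_smul]
    rw [e, Matrix.det_updateCol_smul, norm_mul, Complex.norm_real, Real.norm_of_nonneg hε, hsub]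
    gcongr
    rw [two_mul]
    refine (norm_sub_le _ _).trans (add_le_add (hN _ fun i => ?_) (hN _ fun i => by simp))
    rw [Pi.smul_apply, norm_smul, norm_inv, Complex.norm_real, Real.norm_of_nonneg hε,
      inv_mul_le_iff₀ hpos, mul_one]
    exact hr i

/-- Cramer's rule, without inverting `A`. -/
theorem det_mul_apply_eq {ι : Type*} [Fintype ι] [DecidableEq ι] (A : Matrix ι ι ℂ) (x : ι → ℂ)
    (i : ι) : A.det * x i = (A.updateCol i (A.mulVec x)).det := by
  rw [← Matrix.cramer_apply, Matrix.cramer_eq_adjugate_mulVec, Matrix.mulVec_mulVec,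
    Matrix.adjugate_mul, Matrix.smul_mulVec, Matrix.one_mulVec, Pi.smul_apply, smul_eq_mul]

theorem summable_norm_of_rpow {α : Type*} (V : α → ℂ)
    (hV : Summable fun n => ‖V n‖ ^ ((2 : ℝ) / 3)) : Summable fun n => ‖V n‖ := by
  set S := ∑' n, ‖V n‖ ^ ((2 : ℝ) / 3)
  refine Summable.of_nonneg_of_le (fun _ => norm_nonneg _) (fun n => ?_)
    (hV.mul_right (S ^ ((1 : ℝ) / 2)))
  have h1 : ‖V n‖ ^ ((2 : ℝ) / 3) ≤ S := hV.le_tsum n fun _ _ => by positivity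
  have h2 : ‖V n‖ = ‖V n‖ ^ ((2 : ℝ) / 3) * (‖V n‖ ^ ((2 : ℝ) / 3)) ^ ((1 : ℝ) / 2) := by
    rw [← Real.rpow_mul (norm_nonneg _), ← Real.rpow_add_of_nonneg (norm_nonneg _)
      (by norm_num) (by norm_num)]
    norm_num
  calc ‖V n‖ = _ := h2
    _ ≤ _ := by gcongr

/-- The Birman–Schwinger equation `f = -(L - λ)⁻¹ V f` in coordinates, for an eigenvector `f`. -/
theorem eigenvector_hasSum {d : ℕ} (hd : 0 < d) {V : (Fin d → ℤ) → ℂ} {L T : L2 d →L[ℂ] L2 d}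
    (hL : IsDiscreteLaplacian d L) (hT : IsMulOp d V T) (f : L2 d) (z : ℂ) (hz0 : z ≠ 0)
    (hz : ‖z‖ < 1) (hf : (L + T) f = ((d : ℂ) / 2 * (z + z⁻¹)) • f) (n : Fin d → ℤ) :
    HasSum (fun m => -(green L z n m * V m * f m)) (f n) := by
  have h1 : pencil L z f = -(z • T f) := by
    rw [pencil_eq L z hz0]
    change z • (L f - ((d : ℂ) / 2 * (z + z⁻¹)) • f) = _
    rw [← hf, ← smul_neg]
    congr 1
    change L f - (L f + T f) = _
    abel
  have h2 : f = -(z • Ring.inverse (pencil L z) (T f)) := by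
    have h3 := DFunLike.congr_fun
      (Ring.inverse_mul_cancel _ (isUnit_pencil hd hL z hz)) f
    change Ring.inverse (pencil L z) (pencil L z f) = f at h3
    rw [h1, map_neg, map_smul] at h3
    exact h3.symm
  have h4 : HasSum (fun m => lp.single 2 m (T f m)) (T f) :=
    lp.hasSum_single (by norm_num) (T f)
  have h5 := (((lp.evalCLM ℂ (fun _ : Fin d → ℤ => ℂ) 2 n).comp
    (-(z • Ring.inverse (pencil L z)))).hasSum h4)
  have e1 : ((lp.evalCLM ℂ (fun _ : Fin d → ℤ => ℂ) 2 n).comp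
    (-(z • Ring.inverse (pencil L z)))) (T f) = f n := by
    conv_rhs => rw [h2]
    rfl
  rw [e1] at h5
  refine h5.congr_fun fun m => ?_
  have e2 : lp.single 2 m (T f m) = (V m * f m) • (lp.single 2 m 1 : L2 d) := by
    rw [← lp.single_smul, smul_eq_mul, mul_one, hT]
  rw [e2, map_smul]
  change _ = (V m * f m) • (-(z * Ring.inverse (pencil L z) (lp.single 2 m 1) n))
  rw [green, smul_eq_mul]
  ring

/-- The perturbation determinant `det (1 + (L - λ)⁻¹ V)` truncated to a finite set `F` of sites, at
`λ = (d/2)(z + 1/z)`. -/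
noncomputable def truncDet {d : ℕ} (L : L2 d →L[ℂ] L2 d) (V : (Fin d → ℤ) → ℂ)
    (F : Finset (Fin d → ℤ)) (z : ℂ) : ℂ :=
  (1 + Matrix.of fun i j : F => green L z i j * V j).det

theorem truncDet_differentiableOn {d : ℕ} (hd : 0 < d) {L : L2 d →L[ℂ] L2 d}
    (hL : IsDiscreteLaplacian d L) (V : (Fin d → ℤ) → ℂ) (F : Finset (Fin d → ℤ)) :
    DifferentiableOn ℂ (truncDet L V F) (Metric.ball 0 1) := by
  unfold truncDet
  simp only [Matrix.det_apply, Matrix.add_apply, Matrix.of_apply]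
  refine DifferentiableOn.fun_sum fun s _ => DifferentiableOn.const_smul ?_ _
  refine DifferentiableOn.fun_finsetProd fun i _ => ?_
  exact ((green_differentiableOn hd hL _ _).mul_const _).const_add _

theorem truncDet_zero {d : ℕ} (L : L2 d →L[ℂ] L2 d) (V : (Fin d → ℤ) → ℂ)
    (F : Finset (Fin d → ℤ)) : truncDet L V F 0 = 1 := by
  have : (Matrix.of fun i j : F => green L 0 i j * V j) = 0 := by
    ext i j
    simp [green]
  rw [truncDet, this, add_zero, Matrix.det_one]

/-- `(B |V_j|)^{1/3}`: its cube bounds column `j` of `(L - λ)⁻¹ V` when `B` bounds the Green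
kernel, and its square is proportional to `|V_j|^{2/3}`. -/
noncomputable def colWeight {d : ℕ} (B : ℝ) (V : (Fin d → ℤ) → ℂ) (j : Fin d → ℤ) : ℝ :=
  (B * ‖V j‖) ^ ((1 : ℝ) / 3)

theorem colWeight_cube {d : ℕ} {B : ℝ} (hB : 0 ≤ B) (V : (Fin d → ℤ) → ℂ) (j : Fin d → ℤ) :
    colWeight B V j ^ 3 = B * ‖V j‖ := by
  rw [colWeight, ← Real.rpow_natCast, ← Real.rpow_mul (by positivity)]
  norm_num

theorem sum_colWeight_sq_le {d : ℕ} {B : ℝ} (hB : 0 ≤ B) (V : (Fin d → ℤ) → ℂ)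
    (hV : Summable fun n => ‖V n‖ ^ ((2 : ℝ) / 3)) (F : Finset (Fin d → ℤ)) :
    ∑ j : F, colWeight B V j ^ 2
      ≤ B ^ ((2 : ℝ) / 3) * ∑' n, ‖V n‖ ^ ((2 : ℝ) / 3) := by
  have h : ∀ j, colWeight B V j ^ 2 = B ^ ((2 : ℝ) / 3) * ‖V j‖ ^ ((2 : ℝ) / 3) := by
    intro j
    rw [colWeight, ← Real.rpow_natCast, ← Real.rpow_mul (by positivity),
      ← Real.mul_rpow hB (norm_nonneg _)]
    norm_num
  rw [sum_coe_sort F fun j => colWeight B V j ^ 2]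
  simp_rw [h, ← mul_sum]
  gcongr
  exact hV.sum_le_tsum _ fun _ _ => by positivity

/-- At the point `z` of an eigenvalue the truncated determinants tend to `0`. If `f` is an
eigenvector with `f n₀ ≠ 0`, then by the Birman–Schwinger equation `1 + (L - λ)⁻¹ V` truncated to `F`
maps `f` to a vector whose entries are bounded by a tail of `∑ |V f|`; Cramer's rule at `n₀` then
bounds the determinant by a constant multiple of that tail. -/
theorem truncDet_tendsto_zero {d : ℕ} (hd : 0 < d) {V : (Fin d → ℤ) → ℂ}
    (hV : Summable fun n => ‖V n‖ ^ ((2 : ℝ) / 3)) {L T : L2 d →L[ℂ] L2 d}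
    (hL : IsDiscreteLaplacian d L) (hT : IsMulOp d V T) {B : ℝ} (hB0 : 0 ≤ B) (z : ℂ)
    (hB : ∀ n m, ‖green L z n m‖ ≤ B) (f : L2 d) (hf0 : f ≠ 0) (hz0 : z ≠ 0)
    (hz : ‖z‖ < 1) (hf : (L + T) f = ((d : ℂ) / 2 * (z + z⁻¹)) • f) :
    Tendsto (fun F => truncDet L V F z) atTop (𝓝 0) := by
  obtain ⟨n₀, hn₀⟩ : ∃ n, f n ≠ 0 := by
    by_contra! h
    exact hf0 (lp.ext (funext h))
  have hVf : Summable fun m => ‖V m * f m‖ := by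
    refine Summable.of_nonneg_of_le (fun _ => norm_nonneg _) (fun m => ?_)
      ((summable_norm_of_rpow V hV).mul_right ‖f‖)
    rw [norm_mul]
    gcongr
    exact lp.norm_apply_le_norm (by norm_num) f m
  set σ := B ^ ((2 : ℝ) / 3) * ∑' n, ‖V n‖ ^ ((2 : ℝ) / 3)
  set E := 2 * Real.exp (√(Real.exp 1 * (σ + 1)) * (σ + 1))
  set tail : Finset (Fin d → ℤ) → ℝ := fun F => ∑' m : {m // m ∉ F}, ‖V m * f m‖ with htail
  have htend : Tendsto tail atTop (𝓝 0) := tendsto_tsum_compl_atTop_zero fun m => ‖V m * f m‖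
  have hmain : ∀ F, n₀ ∈ F → ‖truncDet L V F z‖ ≤ B * tail F * E / ‖f n₀‖ := by
    intro F hF
    rw [le_div_iff₀ (norm_pos_iff.2 hn₀), ← norm_mul, truncDet]
    have hcr := det_mul_apply_eq (1 + Matrix.of fun i j : F => green L z i j * V j)
      (fun i : F => f i) ⟨n₀, hF⟩
    rw [hcr]
    refine norm_det_updateCol_le _ (fun j : F => colWeight B V j)
      (fun j => Real.rpow_nonneg (by positivity) _) (fun i j => ?_) σ
      (sum_colWeight_sq_le hB0 V hV F) _ _ _
      (mul_nonneg hB0 (tsum_nonneg fun _ => norm_nonneg _)) fun n => ?_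
    · rw [colWeight_cube hB0, Matrix.of_apply, norm_mul]
      gcongr
      exact hB _ _
    · have hs := eigenvector_hasSum hd hL hT f z hz0 hz hf n
      have hle : ∀ m, ‖-(green L z n m * V m * f m)‖ ≤ B * ‖V m * f m‖ := by
        intro m
        rw [norm_neg, mul_assoc, norm_mul]
        gcongr
        exact hB _ _
      have hsplit := hs.summable.sum_add_tsum_subtype_compl F
      rw [hs.tsum_eq] at hsplit
      have hr : (1 + Matrix.of fun i j : F => green L z i j * V j).mulVec (fun i : F => f i) n
          = ∑' m : {m // m ∉ F}, -(green L z n m * V m * f m) := by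
        rw [Matrix.add_mulVec, Matrix.one_mulVec, Pi.add_apply, ← hsplit]
        simp only [Matrix.mulVec, dotProduct, Matrix.of_apply]
        rw [sum_coe_sort F fun j => green L z n j * V j * f j, sum_neg_distrib]
        ring
      rw [hr, htail, ← tsum_mul_left]
      exact tsum_of_norm_bounded
        ((hVf.subtype (fun m => m ∉ F)).mul_left B).hasSum fun m => hle m
  refine squeeze_zero_norm' ?_ (a := fun F => B * tail F * E / ‖f n₀‖) ?_
  · filter_upwards [eventually_ge_atTop {n₀}] with F hF
    exact hmain F (hF (mem_singleton_self _))
  · simpa using ((htend.const_mul B).mul_const E).div_const ‖f n₀‖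

/-- For `d ≥ 3` there is `C = C(d) > 0` such that for every
`V ∈ ℓ^{2/3}(ℤᵈ)`, with `H = Δ + V` and `E` the set of eigenvalues of `H` in `ℂ \ [-d,d]`,
one has `∑_{λ ∈ E} (1 - |z(λ)|) ≤ C‖V‖_{2/3}`, where `z(λ)` is the unique point of the
open unit disc with `λ = (d/2)(z + 1/z)`. -/
theorem statement14 (d : ℕ) (hd : 3 ≤ d) :
    ∃ C : ℝ, 0 < C ∧
      ∀ (V : (Fin d → ℤ) → ℂ), Summable (fun n => ‖V n‖ ^ ((2:ℝ)/3)) →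
      ∀ (L T : lp (fun _ : Fin d → ℤ => ℂ) 2 →L[ℂ] lp (fun _ : Fin d → ℤ => ℂ) 2),
        IsDiscreteLaplacian d L → IsMulOp d V T →
      ∀ zf : ℂ → ℂ,
        (∀ l ∈ evSet d (L + T), ‖zf l‖ < 1 ∧ l = ((d : ℂ) / 2) * (zf l + (zf l)⁻¹)) →
        Summable (fun l : evSet d (L + T) => 1 - ‖zf l‖) ∧
        (∑' l : evSet d (L + T), (1 - ‖zf l‖))
          ≤ C * (∑' n : Fin d → ℤ, ‖V n‖ ^ ((2:ℝ)/3)) ^ ((3:ℝ)/2) := by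
  have hd0 : 0 < d := by omega
  obtain ⟨B, hB0, hB⟩ := exists_green_bound d hd
  refine ⟨√(Real.exp 1) * B, by positivity, fun V hV L T hL hT zf hzf => ?_⟩
  set s := ∑' n : Fin d → ℤ, ‖V n‖ ^ ((2 : ℝ) / 3) with hs
  have hs0 : 0 ≤ s := tsum_nonneg fun _ => by positivity
  set σ := B ^ ((2 : ℝ) / 3) * s with hσ
  have hσ0 : 0 ≤ σ := by positivity
  -- The exponent in `norm_det_one_add_le`, rewritten in terms of `‖V‖_{2/3} = s ^ (3/2)`.
  have hM : √(Real.exp 1 * σ) * σ = √(Real.exp 1) * B * s ^ ((3 : ℝ) / 2) := by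
    have h1 : √σ * σ = σ ^ ((3 : ℝ) / 2) := by
      rw [Real.sqrt_eq_rpow]
      conv_lhs => rw [← Real.rpow_one σ, ← Real.rpow_mul hσ0]
      rw [← Real.rpow_add_of_nonneg hσ0 (by norm_num) (by norm_num)]
      norm_num
    rw [Real.sqrt_mul (Real.exp_pos 1).le, mul_assoc, h1, hσ, Real.mul_rpow (by positivity) hs0,
      ← Real.rpow_mul hB0.le, mul_assoc]
    norm_num
  -- The value `zf l = 0` would give `l = 0` by the convention `0⁻¹ = 0`, but `0 ∈ [-d, d]`.
  have hne : ∀ l ∈ evSet d (L + T), zf l ≠ 0 := by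
    intro l hl h0
    have h1 := (hzf l hl).2
    rw [h0] at h1
    apply hl.2
    rw [h1]
    simp
  have hsum : ∀ u : Finset (evSet d (L + T)), ∑ l ∈ u, (1 - ‖zf l‖)
      ≤ √(Real.exp 1) * B * s ^ ((3 : ℝ) / 2) := by
    intro u
    -- `l` is a function of `zf l`, so distinct eigenvalues give distinct points of the disc.
    have hinj : ∀ x ∈ u, ∀ y ∈ u, zf x = zf y → x = y := by
      intro x _ y _ hxy
      apply Subtype.ext
      rw [(hzf x x.2).2, (hzf y y.2).2, hxy]
    rw [← sum_image (f := fun a : ℂ => 1 - ‖a‖) (g := fun l : evSet d (L + T) => zf l) hinj, ← hM]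
    refine sum_one_sub_norm_le (l := (atTop : Filter (Finset (Fin d → ℤ)))) (truncDet L V) _ _
      ?_ (truncDet_differentiableOn hd0 hL V) (fun F z hz => ?_) (truncDet_zero L V) ?_
    · intro a ha
      obtain ⟨l, _, rfl⟩ := mem_image.1 ha
      simpa using (hzf l l.2).1
    · refine norm_det_one_add_le _ (fun j : F => colWeight B V j)
        (fun j => Real.rpow_nonneg (by positivity) _) (fun i j => ?_) σ
        (sum_colWeight_sq_le hB0.le V hV F)
      rw [colWeight_cube hB0.le, Matrix.of_apply, norm_mul]
      gcongr
      exact hB L hL z (by simpa using hz) _ _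
    · intro a ha
      obtain ⟨l, _, rfl⟩ := mem_image.1 ha
      obtain ⟨f, hf0, hf⟩ := l.2.1
      obtain ⟨hz, hlz⟩ := hzf l l.2
      refine truncDet_tendsto_zero hd0 hV hL hT hB0.le _ (hB L hL _ hz) f hf0 (hne l l.2) hz ?_
      rw [← hlz]
      exact hf
  have hnn : ∀ l : evSet d (L + T), 0 ≤ 1 - ‖zf l‖ := fun l =>
    sub_nonneg.2 (hzf l l.2).1.le
  exact ⟨summable_of_sum_le hnn hsum,
    (summable_of_sum_le hnn hsum).tsum_le_of_sum_le hsum⟩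
end

section
/- Let d ≥ 3 be an integer. There exists a constant C = C(d) > 0 with the following property: for every V : ℤᵈ → ℝ with V(n) ≥ 0 for all n and ∑_{n ∈ ℤᵈ} V(n)^{2/3} < ∞, letting H = Δ + V, every eigenvalue of H lying outside [−d,d] is a real number λ > d, and ∑_{λ ∈ E} √(λ² − d²) ≤ ∑_{n ∈ ℤᵈ} V(n) + C · ‖V‖_{2/3}, where E is the set of eigenvalues of H lying in ℂ∖[−d,d], each counted once. -/
/-! ### A unit flow of finite energy on the orthant `ℕ³` -/

namespace Polya

/-- The mass `2/((s+1)(s+2))`, `s = |x|`, that a unit flow from the origin of `ℕ³` carries through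
the point `x`: the law of the Pólya urn is uniform on each of the layers `|x| = s`. -/
noncomputable def W (x : ℕ × ℕ × ℕ) : ℝ :=
  2 / ((x.1 + x.2.1 + x.2.2 + 1) * (x.1 + x.2.1 + x.2.2 + 2))

lemma W_nonneg (x : ℕ × ℕ × ℕ) : 0 ≤ W x := by unfold W; positivity

/-- Finite energy, by the crude comparison `|x| + 1 ≥ ((a+1)(b+1)(c+1))^{1/3}`. -/
lemma summable_W_sq : Summable fun x : ℕ × ℕ × ℕ => W x ^ 2 := by
  have h1 : Summable fun n : ℕ => ((n + 1 : ℝ) ^ ((4:ℝ)/3))⁻¹ := by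
    have := (summable_nat_add_iff 1).2 (Real.summable_nat_rpow_inv (p := 4/3) |>.2 (by norm_num))
    simpa using this
  have h0 : ∀ n : ℕ, 0 ≤ ((n + 1 : ℝ) ^ ((4:ℝ)/3))⁻¹ := fun n => by positivity
  have h2 := h1.mul_of_nonneg (h1.mul_of_nonneg h1 h0 h0) h0
    (fun x => mul_nonneg (h0 x.1) (h0 x.2))
  refine Summable.of_nonneg_of_le (fun x => sq_nonneg _) ?_ (h2.mul_left 4)
  rintro ⟨a, b, c⟩
  simp only [W]
  set s : ℝ := a + b + c with hs
  have ha : (0:ℝ) ≤ a := a.cast_nonneg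
  have hb : (0:ℝ) ≤ b := b.cast_nonneg
  have hc : (0:ℝ) ≤ c := c.cast_nonneg
  have key : ((a:ℝ)+1) ^ ((4:ℝ)/3) * (((b:ℝ)+1) ^ ((4:ℝ)/3) * ((c:ℝ)+1) ^ ((4:ℝ)/3))
      ≤ (s+1)^4 := by
    have e : (s+1)^4 = (s+1) ^ ((4:ℝ)/3) * ((s+1) ^ ((4:ℝ)/3) * (s+1) ^ ((4:ℝ)/3)) := by
      rw [← Real.rpow_add (by positivity), ← Real.rpow_add (by positivity), ← Real.rpow_natCast]
      norm_num
    rw [e]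
    gcongr <;> linarith
  rw [← mul_inv, ← mul_inv, ← div_eq_mul_inv, div_pow]
  gcongr
  · norm_num
  · refine key.trans ?_
    have : (s+1)^4 = ((s+1)*(s+1))^2 := by ring
    rw [this]
    gcongr
    norm_num

/-- Cauchy–Schwarz for series. -/
lemma tsum_mul_le {ι : Type*} {a b : ι → ℝ} (ha : Summable fun i => a i ^ 2)
    (hb : Summable fun i => b i ^ 2) (ha0 : ∀ i, 0 ≤ a i) (hb0 : ∀ i, 0 ≤ b i) :
    Summable (fun i => a i * b i) ∧
    (∑' i, a i * b i) ≤ √(∑' i, a i ^ 2) * √(∑' i, b i ^ 2) := by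
  have hf : ∀ s : Finset ι, ∑ i ∈ s, a i * b i ≤ √(∑' i, a i ^ 2) * √(∑' i, b i ^ 2) := by
    intro s
    refine (Real.sum_mul_le_sqrt_mul_sqrt s a b).trans ?_
    gcongr
    · exact ha.sum_le_tsum s (fun i _ => sq_nonneg _)
    · exact hb.sum_le_tsum s (fun i _ => sq_nonneg _)
  exact ⟨summable_of_sum_le (fun i => mul_nonneg (ha0 i) (hb0 i)) hf,
    Real.tsum_le_of_sum_le (fun i => mul_nonneg (ha0 i) (hb0 i)) hf⟩

/-- The Pólya urn flow, indexed by the endpoint of an edge: `Φ (x j) x` is the flow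
`2 xⱼ/(s(s+1)(s+2))`, `s = |x|`, through the edge from `x - eⱼ` to `x`. It vanishes for `xⱼ = 0`
(no such edge in the orthant), also at the origin because of `0/0 = 0`. -/
noncomputable def Φ (t : ℕ) (x : ℕ × ℕ × ℕ) : ℝ :=
  2 * t / ((x.1 + x.2.1 + x.2.2) * (x.1 + x.2.1 + x.2.2 + 1) * (x.1 + x.2.1 + x.2.2 + 2))

lemma Φ_nonneg (t : ℕ) (x : ℕ × ℕ × ℕ) : 0 ≤ Φ t x := by unfold Φ; positivity

lemma Φ_le (t : ℕ) (x : ℕ × ℕ × ℕ) (h : t ≤ x.1 + x.2.1 + x.2.2) : Φ t x ≤ W x := by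
  have h' : (t:ℝ) ≤ x.1 + x.2.1 + x.2.2 := by exact_mod_cast h
  unfold Φ W
  set s : ℝ := x.1 + x.2.1 + x.2.2 with hs
  have hs0 : 0 ≤ s := by positivity
  rcases hs0.eq_or_lt with h0 | h0
  · rw [← h0]; norm_num
  · rw [div_le_div_iff₀ (by positivity) (by positivity)]
    have : 0 ≤ (s - t) * (2 * (s+1) * (s+2)) := by
      have := sub_nonneg.2 h'
      positivity
    linarith

lemma summable_aux {g : ℕ × ℕ × ℕ → ℂ} (hg : Summable fun x => ‖g x‖ ^ 2) {φ : ℕ × ℕ × ℕ → ℝ}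
    (h0 : ∀ x, 0 ≤ φ x) (h : ∀ x, φ x ≤ W x) :
    Summable (fun x => (φ x : ℂ) * g x) ∧
    ‖∑' x, (φ x : ℂ) * g x‖ ≤ √(∑' x, W x ^ 2) * √(∑' x, ‖g x‖ ^ 2) := by
  have hW := tsum_mul_le summable_W_sq hg W_nonneg (fun x => norm_nonneg (g x))
  have hle : ∀ x, ‖(φ x : ℂ) * g x‖ ≤ W x * ‖g x‖ := fun x => by
    rw [norm_mul, Complex.norm_real, Real.norm_of_nonneg (h0 x)]
    gcongr
    exact h x
  exact ⟨Summable.of_norm_bounded hW.1 hle, (tsum_of_norm_bounded hW.1.hasSum hle).trans hW.2⟩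

lemma shift_sum {g : ℕ × ℕ × ℕ → ℂ} {σ : ℕ × ℕ × ℕ → ℕ × ℕ × ℕ} (hσ : σ.Injective)
    {φ : ℕ × ℕ × ℕ → ℝ} (h : ∀ y, y ∉ Set.range σ → φ y = 0) :
    ∑' x, (φ (σ x) : ℂ) * g (σ x) = ∑' y, (φ y : ℂ) * g y := by
  refine hσ.tsum_eq (f := fun y => (φ y : ℂ) * g y) ?_
  intro y hy
  by_contra hn
  exact hy (by simp [h y hn])

/-- Summation by parts along one coordinate direction, followed by Cauchy–Schwarz. Here `σ` is the
unit step in that direction and `p` the corresponding coordinate. -/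
lemma sum_by_parts_dir {g : ℕ × ℕ × ℕ → ℂ} (hg : Summable fun x => ‖g x‖ ^ 2)
    {σ : ℕ × ℕ × ℕ → ℕ × ℕ × ℕ} (hσ : σ.Injective)
    (hσs : ∀ x, (σ x).1 + (σ x).2.1 + (σ x).2.2 = x.1 + x.2.1 + x.2.2 + 1)
    {p : ℕ × ℕ × ℕ → ℕ} (hp : ∀ x, p x ≤ x.1 + x.2.1 + x.2.2)
    (hpσ : ∀ y, y ∉ Set.range σ → p y = 0) :
    Summable (fun x => (Φ (p (σ x)) (σ x) : ℂ) * g x) ∧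
    Summable (fun x => (Φ (p x) x : ℂ) * g x) ∧
    ‖∑' x, (Φ (p (σ x)) (σ x) : ℂ) * g x - ∑' x, (Φ (p x) x : ℂ) * g x‖
      ≤ √(∑' x, W x ^ 2) * √(∑' x, ‖g (σ x) - g x‖ ^ 2) := by
  have hgσ : Summable fun x => ‖g (σ x)‖ ^ 2 := hg.comp_injective hσ
  have hd : Summable fun x => ‖g x - g (σ x)‖ ^ 2 := by
    refine Summable.of_nonneg_of_le (fun x => sq_nonneg _) (fun x => ?_)
      ((hg.add hgσ).mul_left 2)
    have := norm_sub_le (g x) (g (σ x))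
    nlinarith [norm_nonneg (g x - g (σ x)), sq_nonneg (‖g x‖ - ‖g (σ x)‖)]
  have hΦ : ∀ x, Φ (p (σ x)) (σ x) ≤ W x := by
    intro x
    refine (Φ_le _ _ (hp _)).trans ?_
    have e : ((σ x).1 : ℝ) + (σ x).2.1 + (σ x).2.2 = x.1 + x.2.1 + x.2.2 + 1 := by
      exact_mod_cast hσs x
    unfold W
    rw [e]
    have hs : (0:ℝ) ≤ x.1 + x.2.1 + x.2.2 := by positivity
    generalize (x.1 : ℝ) + x.2.1 + x.2.2 = s at *
    gcongr <;> linarith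
  have s1 := (summable_aux hg (fun x => Φ_nonneg (p (σ x)) (σ x)) hΦ).1
  have s2 := (summable_aux hgσ (fun x => Φ_nonneg (p (σ x)) (σ x)) hΦ).1
  have s3 := (summable_aux hg (fun x => Φ_nonneg (p x) x) (fun x => Φ_le _ _ (hp x))).1
  refine ⟨s1, s3, ?_⟩
  rw [← shift_sum hσ (φ := fun x => Φ (p x) x) (fun y hy => by simp [hpσ y hy, Φ]),
    ← s1.tsum_sub s2]
  simp only [← mul_sub]
  simp only [norm_sub_rev (g (σ _))]
  exact (summable_aux hd (fun x => Φ_nonneg (p (σ x)) (σ x)) hΦ).2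

/-- The value at the origin is controlled by the Dirichlet energy: pair the unit flow from the
origin, which has finite energy, with the gradient of `g`. -/
lemma orthant_sobolev {g : ℕ × ℕ × ℕ → ℂ} (hg : Summable fun x => ‖g x‖ ^ 2) :
    ‖g 0‖ ^ 2 ≤ 3 * (∑' x, W x ^ 2) *
      ((∑' x : ℕ × ℕ × ℕ, ‖g (x.1 + 1, x.2.1, x.2.2) - g x‖ ^ 2)
      + (∑' x : ℕ × ℕ × ℕ, ‖g (x.1, x.2.1 + 1, x.2.2) - g x‖ ^ 2)
      + (∑' x : ℕ × ℕ × ℕ, ‖g (x.1, x.2.1, x.2.2 + 1) - g x‖ ^ 2)) := by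
  obtain ⟨a1, b1, c1⟩ := sum_by_parts_dir hg (σ := fun x => (x.1 + 1, x.2.1, x.2.2)) (p := fun x => x.1)
    (by rintro ⟨_, _, _⟩ ⟨_, _, _⟩; simp) (by intro x; dsimp only; omega) (by intro x; omega)
    (by rintro ⟨y, _, _⟩ h; by_contra h0
        exact h ⟨(y - 1, _, _), by simp at h0 ⊢; exact ⟨by omega, rfl, rfl⟩⟩)
  obtain ⟨a2, b2, c2⟩ := sum_by_parts_dir hg (σ := fun x => (x.1, x.2.1 + 1, x.2.2)) (p := fun x => x.2.1)
    (by rintro ⟨_, _, _⟩ ⟨_, _, _⟩; simp) (by intro x; dsimp only; omega) (by intro x; omega)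
    (by rintro ⟨_, y, _⟩ h; by_contra h0
        exact h ⟨(_, y - 1, _), by simp at h0 ⊢; exact ⟨rfl, by omega, rfl⟩⟩)
  obtain ⟨a3, b3, c3⟩ := sum_by_parts_dir hg (σ := fun x => (x.1, x.2.1, x.2.2 + 1)) (p := fun x => x.2.2)
    (by rintro ⟨_, _, _⟩ ⟨_, _, _⟩; simp) (by intro x; dsimp only; omega) (by intro x; omega)
    (by rintro ⟨_, _, y⟩ h; by_contra h0
        exact h ⟨(_, _, y - 1), by simp at h0 ⊢; exact ⟨rfl, rfl, by omega⟩⟩)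
  simp only at a1 b1 c1 a2 b2 c2 a3 b3 c3
  -- The divergence of the flow is `1` at the origin and `0` elsewhere.
  have e : g 0 = (∑' x : ℕ × ℕ × ℕ, (Φ (x.1 + 1) (x.1 + 1, x.2.1, x.2.2) : ℂ) * g x
        - ∑' x : ℕ × ℕ × ℕ, (Φ x.1 x : ℂ) * g x)
      + (∑' x : ℕ × ℕ × ℕ, (Φ (x.2.1 + 1) (x.1, x.2.1 + 1, x.2.2) : ℂ) * g x
        - ∑' x : ℕ × ℕ × ℕ, (Φ x.2.1 x : ℂ) * g x)
      + (∑' x : ℕ × ℕ × ℕ, (Φ (x.2.2 + 1) (x.1, x.2.1, x.2.2 + 1) : ℂ) * g x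
        - ∑' x : ℕ × ℕ × ℕ, (Φ x.2.2 x : ℂ) * g x) := by
    rw [← a1.tsum_sub b1, ← a2.tsum_sub b2, ← a3.tsum_sub b3,
      ← (a1.sub b1).tsum_add (a2.sub b2), ← ((a1.sub b1).add (a2.sub b2)).tsum_add (a3.sub b3),
      tsum_eq_single 0]
    · simp [Φ]; ring
    · rintro ⟨a, b, c⟩ hx
      have hpos : 0 < a + b + c := by
        by_contra h
        exact hx (by simp only [Prod.mk_eq_zero]; omega)
      have hpos' : (0:ℝ) < a + b + c := by exact_mod_cast hpos
      rw [← sub_mul, ← sub_mul, ← sub_mul, ← add_mul, ← add_mul]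
      have : (Φ (a + 1) (a + 1, b, c) - Φ a (a, b, c)) + (Φ (b + 1) (a, b + 1, c) - Φ b (a, b, c))
          + (Φ (c + 1) (a, b, c + 1) - Φ c (a, b, c)) = 0 := by
        simp only [Φ]
        push_cast
        have e1 : (a:ℝ) + 1 + b + c = a + b + c + 1 := by ring
        have e2 : (a:ℝ) + (b + 1) + c = a + b + c + 1 := by ring
        have e3 : (a:ℝ) + b + (c + 1) = a + b + c + 1 := by ring
        rw [e1, e2, e3]
        have hh : (c:ℝ) = (a + b + c) - a - b := by ring
        generalize (a:ℝ) + b + c = s at *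
        rw [hh]
        field_simp
        ring
      apply mul_eq_zero_of_left
      exact_mod_cast this
  set S := ∑' x, W x ^ 2
  have hS : 0 ≤ S := tsum_nonneg fun _ => sq_nonneg _
  generalize hE1 : (∑' x : ℕ × ℕ × ℕ, ‖g (x.1 + 1, x.2.1, x.2.2) - g x‖ ^ 2) = E1 at *
  generalize hE2 : (∑' x : ℕ × ℕ × ℕ, ‖g (x.1, x.2.1 + 1, x.2.2) - g x‖ ^ 2) = E2 at *
  generalize hE3 : (∑' x : ℕ × ℕ × ℕ, ‖g (x.1, x.2.1, x.2.2 + 1) - g x‖ ^ 2) = E3 at *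
  have h1 : 0 ≤ E1 := hE1 ▸ tsum_nonneg fun _ => sq_nonneg _
  have h2 : 0 ≤ E2 := hE2 ▸ tsum_nonneg fun _ => sq_nonneg _
  have h3 : 0 ≤ E3 := hE3 ▸ tsum_nonneg fun _ => sq_nonneg _
  have hn : ‖g 0‖ ≤ √S * (√E1 + √E2 + √E3) := by
    conv_lhs => rw [e]
    refine (norm_add₃_le).trans ?_
    linarith
  calc ‖g 0‖ ^ 2 ≤ (√S * (√E1 + √E2 + √E3)) ^ 2 := by gcongr
    _ = S * (√E1 + √E2 + √E3) ^ 2 := by rw [mul_pow, Real.sq_sqrt hS]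
    _ ≤ S * (3 * (E1 + E2 + E3)) := by
        gcongr
        nlinarith [Real.sq_sqrt h1, Real.sq_sqrt h2, Real.sq_sqrt h3, sq_nonneg (√E1 - √E2),
          sq_nonneg (√E1 - √E3), sq_nonneg (√E2 - √E3)]
    _ = _ := by ring

end Polya

/-! ### The quadratic forms of the Laplacian and of the potential -/

namespace Polya
lemma norm_sq_eq {d : ℕ} (f : lp (fun _ : Fin d → ℤ => ℂ) 2) : ‖f‖ ^ 2 = ∑' n, ‖f n‖ ^ 2 := by
  have := lp.norm_rpow_eq_tsum (p := 2) (by norm_num) f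
  simpa using this

lemma summable_sq {d : ℕ} (f : lp (fun _ : Fin d → ℤ => ℂ) 2) : Summable fun n => ‖f n‖ ^ 2 := by
  have := (lp.memℓp f).summable (by norm_num)
  simpa using this

/-- Bessel's inequality for the unit vector at `n`. -/
lemma orthonormal_sum_le {d : ℕ} {ι : Type*} [Fintype ι] {v : ι → lp (fun _ : Fin d → ℤ => ℂ) 2}
    (hv : Orthonormal ℂ v) (n : Fin d → ℤ) : ∑ i, ‖v i n‖ ^ 2 ≤ 1 := by
  classical
  have := hv.sum_inner_products_le (lp.single 2 n (1:ℂ)) (s := Finset.univ)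
  refine le_trans (le_of_eq ?_) (this.trans ?_)
  · refine Finset.sum_congr rfl fun i _ => ?_
    rw [norm_inner_symm, lp.inner_single_left]
    simp
  · simp [lp.norm_single]

lemma hasSum_sq {d : ℕ} (f : lp (fun _ : Fin d → ℤ => ℂ) 2) :
    HasSum (fun n => ‖f n‖ ^ 2) (‖f‖ ^ 2) := by
  rw [norm_sq_eq]
  exact (summable_sq f).hasSum

lemma hasSum_shift {d : ℕ} (f : lp (fun _ : Fin d → ℤ => ℂ) 2) (j : Fin d) :
    HasSum (fun n : Fin d → ℤ => ‖f (n + Pi.single j 1)‖ ^ 2) (‖f‖ ^ 2) := by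
  have := (Equiv.addRight (Pi.single j (1:ℤ) : Fin d → ℤ)).hasSum_iff
    (f := fun n => ‖f n‖ ^ 2) (a := ‖f‖ ^ 2)
  exact this.2 (hasSum_sq f)

/-- The autocorrelation `Re ⟨f, f(· + eⱼ)⟩`; the quadratic form of the discrete Laplacian is the sum of
these over `j`. -/
noncomputable def corr {d : ℕ} (f : lp (fun _ : Fin d → ℤ => ℂ) 2) (j : Fin d) : ℝ :=
  ∑' n, (inner ℂ (f n) (f (n + Pi.single j 1))).re

lemma summable_shift {d : ℕ} (f : lp (fun _ : Fin d → ℤ => ℂ) 2) (j : Fin d) :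
    Summable fun n : Fin d → ℤ => ‖f (n + Pi.single j 1)‖ ^ 2 :=
  (summable_sq f).comp_injective (add_left_injective _)

lemma summable_corr {d : ℕ} (f : lp (fun _ : Fin d → ℤ => ℂ) 2) (j : Fin d) :
    Summable fun n => inner ℂ (f n) (f (n + Pi.single j 1)) := by
  refine Summable.of_norm_bounded ((summable_sq f).add (summable_shift f j)) fun n => ?_
  refine (norm_inner_le_norm _ _).trans ?_
  nlinarith [sq_nonneg (‖f n‖ - ‖f (n + Pi.single j 1)‖), sq_nonneg (‖f n‖),
    sq_nonneg ‖f (n + Pi.single j 1)‖]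

lemma tsum_shift_sub {d : ℕ} (f : lp (fun _ : Fin d → ℤ => ℂ) 2) (j : Fin d) :
    Summable (fun n => ‖f (n + Pi.single j 1) - f n‖ ^ 2) ∧
    ∑' n, ‖f (n + Pi.single j 1) - f n‖ ^ 2 = 2 * (‖f‖ ^ 2 - corr f j) := by
  have h := hasSum_shift f j
  have h0 := hasSum_sq f
  have h1 : HasSum (fun n => (inner ℂ (f n) (f (n + Pi.single j 1))).re) (corr f j) :=
    (Complex.hasSum_re (summable_corr f j).hasSum).summable.hasSum
  have := (h.sub (h1.mul_left 2)).add h0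
  have e : ∀ n, ‖f (n + Pi.single j 1) - f n‖ ^ 2 = ‖f (n + Pi.single j 1)‖ ^ 2
      - 2 * (inner ℂ (f n) (f (n + Pi.single j 1))).re + ‖f n‖ ^ 2 := fun n => by
    rw [norm_sub_sq (𝕜 := ℂ), ← inner_conj_symm]
    simp
  simp only [← e] at this
  exact ⟨this.summable, by rw [this.tsum_eq]; ring⟩

lemma corr_ge {d : ℕ} (f : lp (fun _ : Fin d → ℤ => ℂ) 2) (j : Fin d) : - ‖f‖ ^ 2 ≤ corr f j := by
  have h := hasSum_shift f j
  have h0 := hasSum_sq f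
  have h1 : HasSum (fun n => (inner ℂ (f n) (f (n + Pi.single j 1))).re) (corr f j) :=
    (Complex.hasSum_re (summable_corr f j).hasSum).summable.hasSum
  have := (h.add (h1.mul_left 2)).add h0
  have := this.nonneg fun n => by
    have := norm_add_sq (𝕜 := ℂ) (f n) (f (n + Pi.single j 1))
    have h2 := sq_nonneg ‖f n + f (n + Pi.single j 1)‖
    rw [this] at h2
    simp only [RCLike.re_eq_complex_re] at h2
    linarith
  linarith

lemma inner_lap {d : ℕ} {L : lp (fun _ : Fin d → ℤ => ℂ) 2 →L[ℂ] lp (fun _ : Fin d → ℤ => ℂ) 2}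
    (hL : ∀ (f : lp (fun _ : Fin d → ℤ => ℂ) 2) (n : Fin d → ℤ),
    L f n = (1 / 2) * ∑ j : Fin d, (f (n + Pi.single j 1) + f (n - Pi.single j 1)))
    (f : lp (fun _ : Fin d → ℤ => ℂ) 2) :
    inner ℂ f (L f) = ((∑ j, corr f j : ℝ) : ℂ) := by
  have h1 : ∀ j, HasSum (fun n => inner ℂ (f n) (f (n + Pi.single j 1)))
    (∑' n, inner ℂ (f n) (f (n + Pi.single j 1))) := fun j => (summable_corr f j).hasSum
  have h2 : ∀ j, HasSum (fun n => inner ℂ (f n) (f (n - Pi.single j 1)))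
    (starRingEnd ℂ (∑' n, inner ℂ (f n) (f (n + Pi.single j 1)))) := fun j => by
    have := Complex.hasSum_conj'.2 (h1 j)
    rw [← (Equiv.addRight (Pi.single j (1:ℤ) : Fin d → ℤ)).hasSum_iff]
    convert this using 2 with n
    simp only [Function.comp, Equiv.coe_addRight, add_sub_cancel_right]
    rw [inner_conj_symm]
  have h3 := hasSum_sum (s := Finset.univ) (fun j _ => (h1 j).add (h2 j))
  have h4 := h3.mul_left (1/2)
  rw [lp.inner_eq_tsum]
  have e : ∀ n, inner ℂ (f n) (L f n) = 1/2 * ∑ j, (inner ℂ (f n) (f (n + Pi.single j 1))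
      + inner ℂ (f n) (f (n - Pi.single j 1))) := by
    intro n
    rw [hL]
    simp only [RCLike.inner_apply, Finset.mul_sum, Finset.sum_mul]
    refine Finset.sum_congr rfl fun j _ => by ring
  simp only [e]
  rw [h4.tsum_eq, Finset.mul_sum, Complex.ofReal_sum]
  refine Finset.sum_congr rfl fun j _ => ?_
  rw [Complex.add_conj]
  unfold corr
  rw [Complex.re_tsum (summable_corr f j)]
  push_cast
  ring

lemma inner_mul {d : ℕ} {T : lp (fun _ : Fin d → ℤ => ℂ) 2 →L[ℂ] lp (fun _ : Fin d → ℤ => ℂ) 2}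
    {V : (Fin d → ℤ) → ℝ} (hT : ∀ (f : lp (fun _ : Fin d → ℤ => ℂ) 2) (n : Fin d → ℤ), T f n = (V n : ℂ) * f n)
    (f : lp (fun _ : Fin d → ℤ => ℂ) 2) :
    inner ℂ f (T f) = ((∑' n, V n * ‖f n‖ ^ 2 : ℝ) : ℂ) ∧
    Summable fun n => V n * ‖f n‖ ^ 2 := by
  have e : ∀ n, inner ℂ (f n) (T f n) = ((V n * ‖f n‖ ^ 2 : ℝ) : ℂ) := by
    intro n
    rw [hT, RCLike.inner_apply, mul_assoc, Complex.mul_conj, Complex.normSq_eq_norm_sq]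
    push_cast; rfl
  constructor
  · rw [lp.inner_eq_tsum, Complex.ofReal_tsum]
    simp only [e]
  · have := lp.summable_inner (𝕜 := ℂ) f (T f)
    simp only [e] at this
    exact_mod_cast this

end Polya

/-! ### The Sobolev inequality on `ℤᵈ` and the counting argument -/

namespace Polya

/-- For `d ≥ 3` point values are controlled by the form of `d - Δ`: apply the inequality on `ℕ³` to the
three-dimensional orthant with corner `n` and axes `e₀, e₁, e₂`. -/
lemma pointwise_bound {d : ℕ} (hd : 3 ≤ d) (f : lp (fun _ : Fin d → ℤ => ℂ) 2) (n : Fin d → ℤ) :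
    ‖f n‖ ^ 2 ≤ 6 * (∑' x, W x ^ 2) * (d * ‖f‖ ^ 2 - ∑ j, corr f j) := by
  let i0 : Fin d := ⟨0, by omega⟩
  let i1 : Fin d := ⟨1, by omega⟩
  let i2 : Fin d := ⟨2, by omega⟩
  have h01 : i0 ≠ i1 := by simp [i0, i1]
  have h02 : i0 ≠ i2 := by simp [i0, i2]
  have h12 : i1 ≠ i2 := by simp [i1, i2]
  let ι : ℕ × ℕ × ℕ → Fin d → ℤ := fun x =>
    n + Pi.single i0 (x.1 : ℤ) + Pi.single i1 (x.2.1 : ℤ) + Pi.single i2 (x.2.2 : ℤ)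
  have hι : ι.Injective := by
    rintro ⟨a, b, c⟩ ⟨a', b', c'⟩ h
    have e0 := congrFun h i0
    have e1 := congrFun h i1
    have e2 := congrFun h i2
    simp [ι, h01, h02, h12, h01.symm, h02.symm, h12.symm] at e0 e1 e2
    simp [e0, e1, e2]
  have hs := orthant_sobolev (g := fun x => f (ι x)) ((summable_sq f).comp_injective hι)
  have hD : ∀ j, 0 ≤ 2 * (‖f‖ ^ 2 - corr f j) := fun j => by
    rw [← (tsum_shift_sub f j).2]; exact tsum_nonneg fun _ => sq_nonneg _
  have hE : ∀ (i : Fin d) (σ : ℕ × ℕ × ℕ → ℕ × ℕ × ℕ), (∀ x, ι (σ x) = ι x + Pi.single i 1) →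
      ∑' x, ‖f (ι (σ x)) - f (ι x)‖ ^ 2 ≤ 2 * (‖f‖ ^ 2 - corr f i) := by
    intro i σ h
    rw [← (tsum_shift_sub f i).2]
    simp only [h]
    exact ((tsum_shift_sub f i).1.comp_injective hι).tsum_le_tsum_of_inj ι hι
      (fun _ _ => sq_nonneg _) (fun x => le_rfl) (tsum_shift_sub f i).1
  have g0 := hE i0 (fun x => (x.1 + 1, x.2.1, x.2.2)) (by
    intro x; simp only [ι]; push_cast; rw [Pi.single_add]; abel)
  have g1 := hE i1 (fun x => (x.1, x.2.1 + 1, x.2.2)) (by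
    intro x; simp only [ι]; push_cast; rw [Pi.single_add]; abel)
  have g2 := hE i2 (fun x => (x.1, x.2.1, x.2.2 + 1)) (by
    intro x; simp only [ι]; push_cast; rw [Pi.single_add]; abel)
  have hn : ι 0 = n := by simp [ι]
  have hsum : ∑ j ∈ {i0, i1, i2}, 2 * (‖f‖ ^ 2 - corr f j) ≤ ∑ j, 2 * (‖f‖ ^ 2 - corr f j) :=
    Finset.sum_le_sum_of_subset_of_nonneg (Finset.subset_univ _) fun j _ _ => hD j
  rw [Finset.sum_insert (by simp [h01, h02]), Finset.sum_insert (by simp [h12]),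
    Finset.sum_singleton, ← Finset.mul_sum, Finset.sum_sub_distrib, Finset.sum_const,
    Finset.card_univ, Fintype.card_fin, nsmul_eq_mul] at hsum
  have hS : 0 ≤ ∑' x, W x ^ 2 := tsum_nonneg fun _ => sq_nonneg _
  rw [hn] at hs
  refine hs.trans ?_
  have : 6 * (∑' x, W x ^ 2) * (d * ‖f‖ ^ 2 - ∑ j, corr f j) =
    3 * (∑' x, W x ^ 2) * (2 * (d * ‖f‖ ^ 2 - ∑ j, corr f j)) := by ring
  rw [this]
  gcongr
  linarith

section count
variable {E : Type*} [NormedAddCommGroup E] [InnerProductSpace ℂ E]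

/-- The span of an orthonormal `N`-tuple contains `N` vectors that are orthonormal for the form
`‖A ·‖²`, if `A` is injective. -/
lemma exists_dual_family {N : ℕ} {A : E →L[ℂ] E} (hA : Function.Injective A) {v : Fin N → E}
    (hv : Orthonormal ℂ v) :
    ∃ h : Fin N → E, (∀ i, h i ∈ Submodule.span ℂ (Set.range v)) ∧
      Orthonormal ℂ (fun i => A (h i)) := by
  set F := Submodule.span ℂ (Set.range v)
  have hF : Module.finrank ℂ F = N := by
    simpa using finrank_span_eq_card hv.linearIndependent
  set G := F.map (A : E →ₗ[ℂ] E)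
  have hG : Module.finrank ℂ G = N := by
    rw [← hF]
    exact (Submodule.equivMapOfInjective (A : E →ₗ[ℂ] E) hA F).finrank_eq.symm
  have : FiniteDimensional ℂ F := FiniteDimensional.span_of_finite ℂ (Set.finite_range v)
  let b := (stdOrthonormalBasis ℂ G).reindex (finCongr hG)
  have hb : ∀ i, ∃ y ∈ F, A y = (b i : E) := fun i => by
    obtain ⟨y, hy, e⟩ := (b i).2
    exact ⟨y, hy, e⟩
  choose h hF' hh using hb
  refine ⟨h, hF', ?_⟩
  simp only [hh]
  exact b.orthonormal.comp_linearIsometry G.subtypeₗᵢ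

/-- A span of orthonormal eigenvectors with nonnegative eigenvalues carries a nonnegative form. -/
lemma form_nonneg {N : ℕ} {B : E →L[ℂ] E} {v : Fin N → E} (hv : Orthonormal ℂ v) {μ : Fin N → ℝ}
    (hμ : ∀ i, 0 ≤ μ i) (hB : ∀ i, B (v i) = (μ i : ℂ) • v i) {x : E}
    (hx : x ∈ Submodule.span ℂ (Set.range v)) : 0 ≤ (inner ℂ x (B x)).re := by
  obtain ⟨c, rfl⟩ := (Submodule.mem_span_range_iff_exists_fun ℂ).1 hx
  simp only [map_sum, map_smul, hB, smul_smul]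
  rw [hv.inner_sum, Complex.re_sum]
  refine Finset.sum_nonneg fun i _ => ?_
  have : (starRingEnd ℂ) (c i) * (c i * μ i) = ((Complex.normSq (c i) * μ i : ℝ) : ℂ) := by
    rw [← mul_assoc, ← Complex.normSq_eq_conj_mul_self]; push_cast; rfl
  rw [this, Complex.ofReal_re]
  exact mul_nonneg (Complex.normSq_nonneg _) (hμ i)
end count

/-- A Bessel bound for the point evaluations on a family that is orthonormal for the form `‖A ·‖²`. -/
lemma frame_bound {d N : ℕ} {A : lp (fun _ : Fin d → ℤ => ℂ) 2 →L[ℂ] lp (fun _ : Fin d → ℤ => ℂ) 2}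
    {K : ℝ} (hK : 0 ≤ K) (hA : ∀ (f : lp (fun _ : Fin d → ℤ => ℂ) 2) n, ‖f n‖ ^ 2 ≤ K * ‖A f‖ ^ 2)
    {h : Fin N → lp (fun _ : Fin d → ℤ => ℂ) 2} (hh : Orthonormal ℂ (fun i => A (h i)))
    (n : Fin d → ℤ) : ∑ i, ‖h i n‖ ^ 2 ≤ K := by
  set s := ∑ i, ‖h i n‖ ^ 2 with hs
  have hs0 : 0 ≤ s := Finset.sum_nonneg fun i _ => sq_nonneg _
  -- The pointwise bound for this extremal combination reads `s² ≤ K s`.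
  set f := ∑ i, (starRingEnd ℂ (h i n)) • h i with hf
  have e1 : f n = (s : ℂ) := by
    rw [hf, lp.coeFn_sum, Finset.sum_apply, hs, Complex.ofReal_sum]
    refine Finset.sum_congr rfl fun i _ => ?_
    rw [lp.coeFn_smul, Pi.smul_apply, smul_eq_mul, ← Complex.normSq_eq_conj_mul_self,
      Complex.normSq_eq_norm_sq]
  have e2 : ‖A f‖ ^ 2 = s := by
    rw [hf, map_sum]
    simp only [map_smul]
    have := hh.inner_sum (fun i => (starRingEnd ℂ (h i n))) (fun i => (starRingEnd ℂ (h i n)))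
      Finset.univ
    rw [inner_self_eq_norm_sq_to_K, RCLike.ofReal_eq_complex_ofReal, ← Complex.ofReal_pow] at this
    have h2 : ∑ i, (starRingEnd ℂ) ((starRingEnd ℂ) (h i n)) * (starRingEnd ℂ) (h i n) = (s:ℂ) := by
      rw [hs, Complex.ofReal_sum]
      refine Finset.sum_congr rfl fun i _ => ?_
      rw [← Complex.normSq_eq_conj_mul_self, Complex.normSq_conj, Complex.normSq_eq_norm_sq]
    rw [h2] at this
    exact Complex.ofReal_injective this
  have := hA f n
  rw [e1, e2, Complex.norm_real, Real.norm_of_nonneg hs0] at this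
  rcases hs0.eq_or_lt with h0 | h0
  · exact h0 ▸ hK
  · nlinarith

/-- The partial trace `∑ᵢ ⟨hᵢ, V hᵢ⟩ = ∑ₙ V(n) ∑ᵢ |hᵢ(n)|²` of the potential. -/
lemma sum_form_le {d N : ℕ} {T : lp (fun _ : Fin d → ℤ => ℂ) 2 →L[ℂ] lp (fun _ : Fin d → ℤ => ℂ) 2}
    {V : (Fin d → ℤ) → ℝ} (hT : IsMulOp d (fun n => (V n : ℂ)) T) (hV : ∀ n, 0 ≤ V n)
    (hVs : Summable V) {K : ℝ} {h : Fin N → lp (fun _ : Fin d → ℤ => ℂ) 2}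
    (hh : ∀ n, ∑ i, ‖h i n‖ ^ 2 ≤ K) :
    ∑ i, (inner ℂ (h i) (T (h i))).re ≤ K * ∑' n, V n := by
  have e : ∀ i, (inner ℂ (h i) (T (h i))).re = ∑' n, V n * ‖h i n‖ ^ 2 := fun i => by
    rw [(inner_mul hT (h i)).1, Complex.ofReal_re]
  simp only [e]
  rw [← Summable.tsum_finsetSum (fun i _ => (inner_mul hT (h i)).2), ← tsum_mul_left]
  refine Summable.tsum_le_tsum (fun n => ?_) (summable_sum fun i _ => (inner_mul hT (h i)).2)
    (hVs.mul_left K)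
  rw [← Finset.mul_sum, mul_comm K]
  exact mul_le_mul_of_nonneg_left (hh n) (hV n)

/-- The form of a positive operator is `‖A ·‖²`, with `A` its square root. -/
lemma exists_norm_sq_eq_form {E : Type*} [NormedAddCommGroup E] [InnerProductSpace ℂ E] [CompleteSpace E]
    {B : E →L[ℂ] E} (hB : B.IsPositive) : ∃ A : E →L[ℂ] E, ∀ f, ((‖A f‖ ^ 2 : ℝ) : ℂ) = inner ℂ f (B f) := by
  have hB' := (ContinuousLinearMap.nonneg_iff_isPositive B).2 hB
  refine ⟨CFC.sqrt B, fun f => ?_⟩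
  have hsa : IsSelfAdjoint (CFC.sqrt B) := (CFC.sqrt_nonneg B).isSelfAdjoint
  have h1 := hsa.isSymmetric f (CFC.sqrt B f)
  have h2 := congrArg (fun B => B f) (CFC.sqrt_mul_sqrt_self _ hB')
  simp only [mul_apply_eq_comp] at h2
  simp only [ContinuousLinearMap.coe_coe] at h1
  rw [h2, inner_self_eq_norm_sq_to_K] at h1
  rw [← h1]
  simp

lemma exists_sqrt_laplacian {d : ℕ}
    {L : lp (fun _ : Fin d → ℤ => ℂ) 2 →L[ℂ] lp (fun _ : Fin d → ℤ => ℂ) 2}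
    (hL : IsDiscreteLaplacian d L) :
    ∃ A : lp (fun _ : Fin d → ℤ => ℂ) 2 →L[ℂ] lp (fun _ : Fin d → ℤ => ℂ) 2,
      ∀ f, ‖A f‖ ^ 2 = d * ‖f‖ ^ 2 - ∑ j, corr f j := by
  have hin : ∀ f, inner ℂ f (((d : ℂ) • (1 : lp (fun _ : Fin d → ℤ => ℂ) 2 →L[ℂ] lp (fun _ : Fin d → ℤ => ℂ) 2) - L) f)
      = ((d * ‖f‖ ^ 2 - ∑ j, corr f j : ℝ) : ℂ) := fun f => by
    rw [sub_apply, inner_sub_right, inner_lap hL]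
    simp [inner_smul_right, inner_self_eq_norm_sq_to_K]
  have hpos : ((d : ℂ) • (1 : lp (fun _ : Fin d → ℤ => ℂ) 2 →L[ℂ]
      lp (fun _ : Fin d → ℤ => ℂ) 2) - L).IsPositive := by
    rw [ContinuousLinearMap.isPositive_iff_complex]
    intro f
    rw [← inner_conj_symm, hin f, Complex.conj_ofReal]
    simp only [RCLike.re_eq_complex_re, Complex.ofReal_re]
    refine ⟨trivial, ?_⟩
    have : ∑ j, corr f j ≤ ∑ _j : Fin d, ‖f‖ ^ 2 := Finset.sum_le_sum fun j _ => by
      have h := (tsum_shift_sub f j).2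
      have : 0 ≤ ∑' n : Fin d → ℤ, ‖f (n + Pi.single j 1) - f n‖ ^ 2 :=
        tsum_nonneg fun _ => sq_nonneg _
      linarith
    simp at this
    linarith
  obtain ⟨A, hA⟩ := exists_norm_sq_eq_form hpos
  exact ⟨A, fun f => Complex.ofReal_injective ((hA f).trans (hin f))⟩

end Polya

/-! ### Eigenvalues of `Δ + V` above `d` -/

namespace Polya
section final
variable {d : ℕ} {V : (Fin d → ℤ) → ℝ}
  {L T : lp (fun _ : Fin d → ℤ => ℂ) 2 →L[ℂ] lp (fun _ : Fin d → ℤ => ℂ) 2}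

lemma inner_H (hL : IsDiscreteLaplacian d L) (hT : IsMulOp d (fun n => (V n : ℂ)) T)
    (f : lp (fun _ : Fin d → ℤ => ℂ) 2) :
    inner ℂ f ((L + T) f) = ((∑ j, corr f j + ∑' n, V n * ‖f n‖ ^ 2 : ℝ) : ℂ) := by
  rw [add_apply, inner_add_right, inner_lap hL, (inner_mul hT f).1, Complex.ofReal_add]

lemma symm_H (hL : IsDiscreteLaplacian d L) (hT : IsMulOp d (fun n => (V n : ℂ)) T) :
    ((L + T : lp (fun _ : Fin d → ℤ => ℂ) 2 →L[ℂ] lp (fun _ : Fin d → ℤ => ℂ) 2) :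
      lp (fun _ : Fin d → ℤ => ℂ) 2 →ₗ[ℂ] lp (fun _ : Fin d → ℤ => ℂ) 2).IsSymmetric := by
  rw [LinearMap.isSymmetric_iff_inner_map_self_real]
  intro f
  rw [ContinuousLinearMap.coe_coe, inner_conj_symm, inner_H hL hT f, ← inner_conj_symm,
    inner_H hL hT f, Complex.conj_ofReal]

lemma eig_form (hL : IsDiscreteLaplacian d L) (hT : IsMulOp d (fun n => (V n : ℂ)) T)
    {l : ℂ} {f : lp (fun _ : Fin d → ℤ => ℂ) 2} (hf : (L + T) f = l • f) :
    l * ((‖f‖ ^ 2 : ℝ) : ℂ) = ((∑ j, corr f j + ∑' n, V n * ‖f n‖ ^ 2 : ℝ) : ℂ) := by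
  rw [← inner_H hL hT f, hf, inner_smul_right, inner_self_eq_norm_sq_to_K]
  simp

lemma eig_real (hL : IsDiscreteLaplacian d L) (hT : IsMulOp d (fun n => (V n : ℂ)) T)
    (hV : ∀ n, 0 ≤ V n) {l : ℂ} (hl : l ∈ evSet d (L + T)) : l.im = 0 ∧ (d : ℝ) < l.re := by
  obtain ⟨⟨f, hf0, hf⟩, hl⟩ := hl
  have h := eig_form hL hT hf
  have hpos : 0 < ‖f‖ ^ 2 := by positivity
  have him : l.im = 0 := by
    have := congrArg Complex.im h
    rw [Complex.im_mul_ofReal, Complex.ofReal_im] at this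
    exact (mul_eq_zero.1 this).resolve_right hpos.ne'
  have hre : l.re * ‖f‖ ^ 2 = ∑ j, corr f j + ∑' n, V n * ‖f n‖ ^ 2 := by
    have := congrArg Complex.re h
    rwa [Complex.re_mul_ofReal, Complex.ofReal_re] at this
  have h1 : ∑ _j : Fin d, -‖f‖ ^ 2 ≤ ∑ j, corr f j := Finset.sum_le_sum fun j _ => corr_ge f j
  have h2 : 0 ≤ ∑' n, V n * ‖f n‖ ^ 2 := tsum_nonneg fun n => mul_nonneg (hV n) (sq_nonneg _)
  have h3 : -(d : ℝ) ≤ l.re := by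
    simp at h1
    by_contra! hlt
    nlinarith
  refine ⟨him, ?_⟩
  by_contra! hle
  exact hl ⟨him, abs_le.2 ⟨h3, hle⟩⟩

lemma exists_eigvecs (hL : IsDiscreteLaplacian d L) (hT : IsMulOp d (fun n => (V n : ℂ)) T)
    {N : ℕ} {l : Fin N → ℂ} (hl : ∀ i, l i ∈ evSet d (L + T)) (hinj : l.Injective) :
    ∃ v : Fin N → lp (fun _ : Fin d → ℤ => ℂ) 2, Orthonormal ℂ v ∧
      ∀ i, (L + T) (v i) = l i • v i := by
  choose f hf0 hf using fun i => (hl i).1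
  refine ⟨fun i => ((‖f i‖⁻¹ : ℝ) : ℂ) • f i, ⟨fun i => ?_, fun i j hij => ?_⟩, fun i => ?_⟩
  · rw [norm_smul, Complex.norm_real, norm_inv, norm_norm,
      inv_mul_cancel₀ (norm_ne_zero_iff.2 (hf0 i))]
  · have := (symm_H hL hT).orthogonalFamily_eigenspaces (hinj.ne hij)
      ⟨f i, Module.End.mem_eigenspace_iff.2 (hf i)⟩ ⟨f j, Module.End.mem_eigenspace_iff.2 (hf j)⟩
    have h2 : inner ℂ (f i) (f j) = 0 := this
    simp only [inner_smul_left, inner_smul_right, h2, mul_zero]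
  · rw [map_smul, hf, smul_comm]

/-- The trace and counting bounds combined through `√(λ² - d²) ≤ λ = (λ - d) + d`. -/
lemma finite_bound (hd : 3 ≤ d) (hV : ∀ n, 0 ≤ V n) (hVs : Summable V)
    (hL : IsDiscreteLaplacian d L) (hT : IsMulOp d (fun n => (V n : ℂ)) T)
    {N : ℕ} {l : Fin N → ℂ} (hl : ∀ i, l i ∈ evSet d (L + T)) (hinj : l.Injective) :
    ∑ i, √((l i).re ^ 2 - (d : ℝ) ^ 2) ≤
      ∑' n, V n + d * (6 * (∑' x, W x ^ 2)) * ∑' n, V n := by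
  obtain ⟨v, hv, hvl⟩ := exists_eigvecs hL hT hl hinj
  have hreal := fun i => eig_real hL hT hV (hl i)
  have hS : 0 ≤ ∑' x, W x ^ 2 := tsum_nonneg fun _ => sq_nonneg _
  obtain ⟨A, hA⟩ := exists_sqrt_laplacian hL
  have hbd : ∀ (f : lp (fun _ : Fin d → ℤ => ℂ) 2) n,
      ‖f n‖ ^ 2 ≤ 6 * (∑' x, W x ^ 2) * ‖A f‖ ^ 2 := fun f n => by
    rw [hA]; exact pointwise_bound hd f n
  have hAinj : Function.Injective A := by
    refine (injective_iff_map_eq_zero A).2 fun f hf => ?_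
    ext n
    have := hbd f n
    rw [hf] at this
    simp only [norm_zero] at this
    have h0 : ‖f n‖ ^ 2 = 0 := le_antisymm (by simpa using this) (sq_nonneg _)
    simpa using h0
  have hTre : ∀ f, (inner ℂ f (T f)).re = ∑' n, V n * ‖f n‖ ^ 2 := fun f => by
    rw [(inner_mul hT f).1, Complex.ofReal_re]
  -- On the span of the eigenvectors `d - Δ ≤ V` as forms, so each vector normalized for the form of
  -- `d - Δ` contributes at least `1` to the trace of `V`.
  have hcount : (N : ℝ) ≤ 6 * (∑' x, W x ^ 2) * ∑' n, V n := by
    obtain ⟨h, hspan, hh⟩ := exists_dual_family hAinj hv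
    refine le_trans ?_ (sum_form_le hT hV hVs (frame_bound (by positivity) hbd hh))
    have : ∀ i, (1:ℝ) ≤ (inner ℂ (h i) (T (h i))).re := by
      intro i
      have h1 := form_nonneg (B := (L + T) - (d : ℂ) • (1 : lp (fun _ : Fin d → ℤ => ℂ) 2 →L[ℂ]
        lp (fun _ : Fin d → ℤ => ℂ) 2)) hv (μ := fun i => (l i).re - d)
        (fun i => sub_nonneg.2 (hreal i).2.le) (fun i => by
          rw [sub_apply, hvl, smul_apply, one_apply_eq_self, ← sub_smul]
          congr 1
          apply Complex.ext <;> simp [(hreal i).1]) (hspan i)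
      rw [sub_apply, inner_sub_right, inner_H hL hT, smul_apply,
        one_apply_eq_self, inner_smul_right, inner_self_eq_norm_sq_to_K] at h1
      have h2 := hA (h i)
      have h3 : ‖A (h i)‖ = 1 := hh.1 i
      have h4 : ((d : ℂ) * ((‖h i‖ : ℝ) : ℂ) ^ 2).re = d * ‖h i‖ ^ 2 := by
        have : (d : ℂ) * ((‖h i‖ : ℝ) : ℂ) ^ 2 = ((d * ‖h i‖ ^ 2 : ℝ) : ℂ) := by push_cast; rfl
        rw [this, Complex.ofReal_re]
      rw [Complex.sub_re, Complex.ofReal_re, RCLike.ofReal_eq_complex_ofReal, h4] at h1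
      rw [h3] at h2
      rw [hTre]
      linarith
    calc (N : ℝ) = ∑ _i : Fin N, (1:ℝ) := by simp
      _ ≤ _ := Finset.sum_le_sum fun i _ => this i
  -- Since `Δ ≤ d`, also `λ - d ≤ ⟨v, V v⟩` for each unit eigenvector `v`.
  have htrace : ∑ i, ((l i).re - d) ≤ ∑' n, V n := by
    have h1 := sum_form_le hT hV hVs (K := 1) (orthonormal_sum_le hv)
    rw [one_mul] at h1
    refine le_trans (Finset.sum_le_sum fun i _ => ?_) h1
    have h2 := congrArg Complex.re (eig_form hL hT (hvl i))
    rw [Complex.re_mul_ofReal, Complex.ofReal_re, hv.1 i] at h2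
    have h3 := hA (v i)
    rw [hv.1 i] at h3
    rw [hTre]
    nlinarith [sq_nonneg ‖A (v i)‖]
  calc ∑ i, √((l i).re ^ 2 - (d : ℝ) ^ 2) ≤ ∑ i, (((l i).re - d) + d) := by
        refine Finset.sum_le_sum fun i _ => ?_
        have := (hreal i).2
        have hd0 : (0:ℝ) ≤ d := d.cast_nonneg
        refine Real.sqrt_le_iff.2 ⟨by linarith, ?_⟩
        rw [sub_add_cancel]
        nlinarith
    _ = ∑ i, ((l i).re - d) + N * d := by rw [Finset.sum_add_distrib]; simp
    _ ≤ ∑' n, V n + (6 * (∑' x, W x ^ 2) * ∑' n, V n) * d := by gcongr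
    _ = _ := by ring
end final

/-- The norm of `ℓ¹` is at most the quasinorm of `ℓ^{2/3}`: write `V = V^{1/3} V^{2/3}` and bound the
first factor by the supremum. -/
lemma l1_le {ι : Type*} {V : ι → ℝ} (hV : ∀ n, 0 ≤ V n)
    (hs : Summable fun n => V n ^ ((2:ℝ)/3)) :
    Summable V ∧ ∑' n, V n ≤ (∑' n, V n ^ ((2:ℝ)/3)) ^ ((3:ℝ)/2) := by
  set S := ∑' n, V n ^ ((2:ℝ)/3) with hS
  have hp : ∀ n, 0 ≤ V n ^ ((2:ℝ)/3) := fun n => Real.rpow_nonneg (hV n) _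
  have hS0 : 0 ≤ S := tsum_nonneg hp
  have h : ∀ n, V n ≤ S ^ ((1:ℝ)/2) * V n ^ ((2:ℝ)/3) := fun n => by
    calc V n = (V n ^ ((2:ℝ)/3)) ^ ((1:ℝ)/2) * V n ^ ((2:ℝ)/3) := by
          rw [← Real.rpow_mul (hV n), ← Real.rpow_add_of_nonneg (hV n) (by norm_num) (by norm_num)]
          norm_num
      _ ≤ _ := by
          exact mul_le_mul_of_nonneg_right (Real.rpow_le_rpow (hp n)
            (hs.le_tsum n fun m _ => hp m) (by norm_num)) (hp n)
  have hsum : Summable V := Summable.of_nonneg_of_le hV h (hs.mul_left _)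
  refine ⟨hsum, (hsum.tsum_le_tsum h (hs.mul_left _)).trans (le_of_eq ?_)⟩
  rw [tsum_mul_left, ← hS]
  nth_rewrite 2 [← Real.rpow_one S]
  rw [← Real.rpow_add_of_nonneg hS0 (by norm_num) (by norm_num)]
  norm_num

end Polya

/-- For `d ≥ 3` there is `C = C(d) > 0` such that for every nonnegative
`V ∈ ℓ^{2/3}(ℤᵈ, ℝ)`, with `H = Δ + V`, every eigenvalue of `H` outside `[-d,d]` is a real
number `λ > d`, and `∑_{λ ∈ E} √(λ² - d²) ≤ ∑ V(n) + C‖V‖_{2/3}`, where `E` is the set of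
eigenvalues of `H` in `ℂ \ [-d,d]`. -/
theorem statement16 (d : ℕ) (hd : 3 ≤ d) :
    ∃ C : ℝ, 0 < C ∧
      ∀ (V : (Fin d → ℤ) → ℝ), (∀ n, 0 ≤ V n) →
        Summable (fun n => V n ^ ((2:ℝ)/3)) →
      ∀ (L T : lp (fun _ : Fin d → ℤ => ℂ) 2 →L[ℂ] lp (fun _ : Fin d → ℤ => ℂ) 2),
        IsDiscreteLaplacian d L → IsMulOp d (fun n => (V n : ℂ)) T →
        (∀ l ∈ evSet d (L + T), l.im = 0 ∧ (d : ℝ) < l.re) ∧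
        Summable (fun l : evSet d (L + T) => Real.sqrt ((l : ℂ).re ^ 2 - (d : ℝ) ^ 2)) ∧
        (∑' l : evSet d (L + T), Real.sqrt ((l : ℂ).re ^ 2 - (d : ℝ) ^ 2))
          ≤ (∑' n : Fin d → ℤ, V n)
            + C * (∑' n : Fin d → ℤ, V n ^ ((2:ℝ)/3)) ^ ((3:ℝ)/2) := by
  have hS : 0 ≤ ∑' x, Polya.W x ^ 2 := tsum_nonneg fun _ => sq_nonneg _
  refine ⟨d * (6 * ∑' x, Polya.W x ^ 2) + 1, by positivity, ?_⟩
  intro V hV hVs L T hL hT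
  obtain ⟨hs, hle⟩ := Polya.l1_le hV hVs
  have hX : 0 ≤ (∑' n : Fin d → ℤ, V n ^ ((2:ℝ)/3)) ^ ((3:ℝ)/2) :=
    (tsum_nonneg hV).trans hle
  have hb : ∀ u : Finset (evSet d (L + T)), ∑ l ∈ u, √((l : ℂ).re ^ 2 - (d : ℝ) ^ 2) ≤
      (∑' n : Fin d → ℤ, V n) + (d * (6 * ∑' x, Polya.W x ^ 2) + 1) *
        (∑' n : Fin d → ℤ, V n ^ ((2:ℝ)/3)) ^ ((3:ℝ)/2) := by
    intro u
    have h := Polya.finite_bound hd hV hs hL hT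
      (l := fun i => ((u.equivFin.symm i : evSet d (L + T)) : ℂ))
      (fun i => (u.equivFin.symm i : evSet d (L + T)).2)
      (Subtype.val_injective.comp (Subtype.val_injective.comp u.equivFin.symm.injective))
    rw [Equiv.sum_comp u.equivFin.symm
      (fun l : u => √(((l : evSet d (L + T)) : ℂ).re ^ 2 - (d : ℝ) ^ 2)),
      Finset.sum_coe_sort u (fun l => √((l : ℂ).re ^ 2 - (d : ℝ) ^ 2))] at h
    refine h.trans ?_
    have : d * (6 * ∑' x, Polya.W x ^ 2) * ∑' n, V n ≤ d * (6 * ∑' x, Polya.W x ^ 2) *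
      (∑' n : Fin d → ℤ, V n ^ ((2:ℝ)/3)) ^ ((3:ℝ)/2) := by gcongr
    linarith
  exact ⟨fun l hl => Polya.eig_real hL hT hV hl,
    summable_of_sum_le (fun _ => Real.sqrt_nonneg _) hb,
    Real.tsum_le_of_sum_le (fun _ => Real.sqrt_nonneg _) hb⟩
end
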